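/- arXiv:1012.3844 — 2 statements merged into one kernel-verified Lean document; each statement's English description precedes it below -/
import Mathlib

section
/- Let 0 < φ < 1, let f be the density of an absolutely continuous nonnegative random variable Z with distribution function F satisfying F(0) = 0, let v : [0,∞) → ℝ be locally bounded, and let m be the locally bounded solution of m(u) = φ ∫₀^u m(u−y) f(y) dy + v(u). Assume: (1) Z has finite variance; (2) F and v belong to C²₀([0,∞)); (3) f' and v'' belong to C²([0,∞)); (4) I₀(f'') < ∞ and I₂(f'') < ∞; (5) sup_u |u² w₁(u)| < ∞ and sup_u |u² w₂(u)| < ∞; (6) sup_u |u² w₁''(u)| < ∞ and sup_u |u² w₂''(u)| < ∞, where w₁(u) := φ v(0) f(u) + v'(u) and w₂(u) := φ m'(0) f(u) + w₁'(u) with m'(0) = φ v(0) f(0) + v'(0). Then m is four times continuously differentiable on (0,∞) and sup_{u>0} |u² m^{(4)}(u)| ≤ φ ( (I₀(f'') + |f'(0)|) · sup_{u>0}|u² m''(u)| + 2 I₁(f'') · sup_{u>0}|u m''(u)| + I₂(f'') · ‖m''‖ ) + φ f(0) · sup_{u>0}|u² m'''(u)| + sup_{u>0}|u² w₂''(u)|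 < ∞. -/
open MeasureTheory Filter Topology
open scoped ENNReal

/-- The function `w₁(u) = φ v(0) f(u) + v'(u)` (note `m(0) = v(0)`). -/
noncomputable def w1 (φ : ℝ) (v f : ℝ → ℝ) : ℝ → ℝ :=
  fun u => φ * v 0 * f u + deriv v u

/-- The function `w₂(u) = φ m'(0) f(u) + w₁'(u)`, where `m'(0) = φ v(0) f(0) + v'(0)`
is expressed through the limits `f0 = f(0⁺)` and `v'0 = v'(0⁺)`. -/
noncomputable def w2 (φ f0 v'0 : ℝ) (v f : ℝ → ℝ) : ℝ → ℝ :=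
  fun u => φ * (φ * v 0 * f0 + v'0) * f u + deriv (w1 φ v f) u

noncomputable def cv (a b : ℝ → ℝ) (u : ℝ) : ℝ := ∫ y in (0:ℝ)..u, a (u - y) * b y

lemma cv_comm (a b : ℝ → ℝ) (u : ℝ) : cv a b u = cv b a u := by
  unfold cv
  have := intervalIntegral.integral_comp_sub_left (a := 0) (b := u) (fun y => a (u - y) * b y) u
  simp only [sub_self, sub_zero, sub_sub_cancel] at this
  rw [← this]
  congr 1; ext x; ring

lemma exists_bdd_icc {a : ℝ → ℝ} (ha : Continuous a) (s t : ℝ) :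
    ∃ C, 0 ≤ C ∧ ∀ x ∈ Set.Icc s t, |a x| ≤ C := by
  obtain ⟨C, hC⟩ := (isCompact_Icc (a := s) (b := t)).exists_bound_of_continuousOn ha.continuousOn
  exact ⟨max C 0, le_max_right _ _, fun x hx => (hC x hx).trans (le_max_left _ _)⟩

lemma cv_integrable {a b : ℝ → ℝ} (ha : Continuous a)
    (hb : ∀ s t : ℝ, IntervalIntegrable b volume s t) (u s t : ℝ) :
    IntervalIntegrable (fun y => a (u - y) * b y) volume s t :=
  (hb s t).continuousOn_mul (by fun_prop)

lemma cv_continuous {a b : ℝ → ℝ} (ha : Continuous a)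
    (hb : ∀ s t : ℝ, IntervalIntegrable b volume s t) : Continuous (cv a b) := by
  rw [continuous_iff_continuousAt]
  intro u
  set K := |u| + 1 with hK
  obtain ⟨C, hC0, hC⟩ := exists_bdd_icc ha (-(2 * K)) (2 * K)
  have hu := abs_lt.1 (show |u| < K by linarith)
  have := intervalIntegral.continuousAt_parametric_primitive_of_dominated (μ := volume)
    (F := fun x y => a (x - y) * b y) (fun y => C * |b y|) (-K) K (a₀ := 0) (b₀ := u) (x₀ := u)
    (fun x => ?_) ?_ ?_ ?_ ?_ ?_ (by simp)
  · have h2 : ContinuousAt (fun x : ℝ => (x, x)) u := by fun_prop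
    exact ContinuousAt.comp (f := fun x : ℝ => (x, x)) this h2
  · exact (cv_integrable ha hb x (-K) K).def'.aestronglyMeasurable
  · have : Set.Ioo (-K) K ∈ 𝓝 u := Ioo_mem_nhds hu.1 hu.2
    filter_upwards [this] with x hx
    refine ae_restrict_of_forall_mem measurableSet_uIoc fun t ht => ?_
    rw [Set.uIoc_of_le (by linarith)] at ht
    rw [norm_mul]
    refine mul_le_mul_of_nonneg_right (hC _ ⟨?_, ?_⟩) (abs_nonneg _)
    · linarith [hx.1, ht.2]
    · linarith [hx.2, ht.1]
  · exact (hb _ _).abs.const_mul C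
  · exact Eventually.of_forall fun t => by fun_prop
  · constructor <;> linarith [abs_nonneg u]
  · exact hu

lemma cv_fubini {a b : ℝ → ℝ} (ha : Continuous a)
    (hb : ∀ s t : ℝ, IntervalIntegrable b volume s t) {u : ℝ} (hu : 0 ≤ u) :
    ∫ s in (0:ℝ)..u, cv a b s = cv (fun x => ∫ t in (0:ℝ)..x, a t) b u := by
  set p : ℝ → ℝ := Set.indicator (Set.Icc 0 u) a with hp
  have hpm : Measurable p := ha.measurable.indicator measurableSet_Icc
  obtain ⟨C, hC0, hC⟩ := exists_bdd_icc ha 0 u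
  have hpC : ∀ x, ‖p x‖ ≤ C := by
    intro x
    by_cases hx : x ∈ Set.Icc 0 u
    · rw [hp, Set.indicator_of_mem hx]; exact hC x hx
    · rw [hp, Set.indicator_of_notMem hx]; simpa using hC0
  have hpi : ∀ s x y : ℝ, IntervalIntegrable (fun y => p (s - y) * b y) volume x y := by
    intro s x y
    constructor
    · exact Integrable.bdd_mul (c := C) (hb x y).1
        (hpm.comp (measurable_const.sub measurable_id)).aestronglyMeasurable
        (Eventually.of_forall fun y => hpC _)
    · exact Integrable.bdd_mul (c := C) (hb x y).2
        (hpm.comp (measurable_const.sub measurable_id)).aestronglyMeasurable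
        (Eventually.of_forall fun y => hpC _)
  have hpi2 : ∀ x y : ℝ, IntervalIntegrable p volume x y := by
    intro x y
    exact ⟨(ha.intervalIntegrable x y).1.indicator measurableSet_Icc,
      (ha.intervalIntegrable x y).2.indicator measurableSet_Icc⟩
  have h1 : ∀ s ∈ Set.Icc 0 u, cv a b s = ∫ y in (0:ℝ)..u, p (s - y) * b y := by
    intro s hs
    rw [← intervalIntegral.integral_add_adjacent_intervals (hpi s 0 s) (hpi s s u)]
    have e2 : ∫ y in s..u, p (s - y) * b y = ∫ y in s..u, 0 := by
      apply intervalIntegral.integral_congr_Ioo_of_le hs.2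
      intro y hy
      have : s - y ∉ Set.Icc 0 u := fun h => by linarith [h.1, hy.1]
      simp [hp, Set.indicator_of_notMem this]
    rw [e2, intervalIntegral.integral_zero, add_zero, cv]
    apply intervalIntegral.integral_congr_Ioo_of_le hs.1
    intro y hy
    have : s - y ∈ Set.Icc 0 u := ⟨by linarith [hy.2], by linarith [hy.1, hs.2]⟩
    simp only [hp, Set.indicator_of_mem this]
  have h2 : ∀ y ∈ Set.Ioo 0 u, ∫ s in (0:ℝ)..u, p (s - y) * b y
      = (∫ t in (0:ℝ)..(u - y), a t) * b y := by
    intro y hy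
    rw [intervalIntegral.integral_mul_const, intervalIntegral.integral_comp_sub_right]
    congr 1
    rw [← intervalIntegral.integral_add_adjacent_intervals (hpi2 (0 - y) 0) (hpi2 0 (u - y))]
    have e2 : ∫ y in (0 - y)..0, p y = ∫ y in (0 - y)..0, 0 := by
      apply intervalIntegral.integral_congr_Ioo_of_le (by linarith [hy.1])
      intro t ht
      have : t ∉ Set.Icc 0 u := fun h => by linarith [h.1, ht.2]
      simp [hp, Set.indicator_of_notMem this]
    rw [e2, intervalIntegral.integral_zero, zero_add]
    apply intervalIntegral.integral_congr_Ioo_of_le (by linarith [hy.2])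
    intro t ht
    have : t ∈ Set.Icc 0 u := ⟨ht.1.le, by linarith [ht.2, hy.1]⟩
    simp only [hp, Set.indicator_of_mem this]
  calc ∫ s in (0:ℝ)..u, cv a b s = ∫ s in (0:ℝ)..u, ∫ y in (0:ℝ)..u, p (s - y) * b y :=
        intervalIntegral.integral_congr (by
          intro s hs; rw [Set.uIcc_of_le hu] at hs; exact h1 s hs)
    _ = ∫ y in (0:ℝ)..u, ∫ s in (0:ℝ)..u, p (s - y) * b y := by
        simp only [intervalIntegral.integral_of_le hu]
        apply integral_integral_swap
        refine Integrable.bdd_mul (c := C) (f := fun z : ℝ × ℝ => p (z.1 - z.2))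
          (g := fun z : ℝ × ℝ => b z.2) (Integrable.comp_snd (hb 0 u).1 _) ?_ ?_
        · exact (hpm.comp (measurable_fst.sub measurable_snd)).aestronglyMeasurable
        · exact Eventually.of_forall fun y => hpC _
    _ = _ := by
        rw [cv]
        exact intervalIntegral.integral_congr_Ioo_of_le hu h2

/-- `a * k = k(0) ∫ a + ∫ a * k'` -/
lemma cv_prim {a b k : ℝ → ℝ} (ha : Continuous a) (hk : Continuous k)
    (hb : ∀ s t : ℝ, IntervalIntegrable b volume s t)
    (hd : ∀ u, 0 < u → HasDerivAt k (b u) u) {u : ℝ} (hu : 0 ≤ u) :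
    cv a k u = k 0 * (∫ t in (0:ℝ)..u, a t) + ∫ s in (0:ℝ)..u, cv a b s := by
  rw [cv_fubini ha hb hu, cv]
  set A : ℝ → ℝ := fun x => ∫ t in (0:ℝ)..x, a t with hA
  have hAd : ∀ x, HasDerivAt A (a x) x := fun x => ha.integral_hasStrictDerivAt 0 x |>.hasDerivAt
  have hAc : Continuous A := continuous_iff_continuousAt.2 fun x => (hAd x).continuousAt
  have := intervalIntegral.integral_mul_deriv_eq_deriv_mul_of_hasDeriv_right (a := 0) (b := u)
    (u := k) (v := fun y => - A (u - y)) (u' := b) (v' := fun y => a (u - y)) hk.continuousOn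
    (by fun_prop) ?_ ?_ (hb _ _) (Continuous.intervalIntegrable (by fun_prop) _ _)
  · have hA0 : A 0 = 0 := by simp [hA]
    simp only [sub_self, hA0, sub_zero, mul_neg, neg_zero, mul_zero,
      intervalIntegral.integral_neg, sub_neg_eq_add] at this
    simp only [cv]
    simp only [mul_comm] at this ⊢
    rw [this, zero_add]
  · intro x hx
    rw [min_eq_left hu] at hx
    exact (hd x hx.1).hasDerivWithinAt
  · intro x hx
    have := ((hAd (u - x)).comp x ((hasDerivAt_id x).const_sub u)).neg
    have h : HasDerivAt (fun y => - A (u - y)) (a (u - x)) x := by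
      have h3 := this
      rw [mul_neg, mul_one, neg_neg] at h3
      exact h3
    exact h.hasDerivWithinAt

lemma cv_hasDeriv {a b k : ℝ → ℝ} (ha : Continuous a) (hk : Continuous k)
    (hb : ∀ s t : ℝ, IntervalIntegrable b volume s t)
    (hd : ∀ u, 0 < u → HasDerivAt k (b u) u) {u : ℝ} (hu : 0 < u) :
    HasDerivAt (cv a k) (k 0 * a u + cv a b u) u := by
  have hc := cv_continuous ha hb
  have h1 : HasDerivAt (fun u => k 0 * (∫ t in (0:ℝ)..u, a t) + ∫ s in (0:ℝ)..u, cv a b s)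
      (k 0 * a u + cv a b u) u :=
    ((ha.integral_hasStrictDerivAt 0 u).hasDerivAt.const_mul _).add
      (hc.integral_hasStrictDerivAt 0 u).hasDerivAt
  refine h1.congr_of_eventuallyEq ?_
  filter_upwards [Ioi_mem_nhds hu] with x hx
  exact cv_prim ha hk hb hd (le_of_lt hx)

lemma renewal_step {φ : ℝ} {g g1 m v v1 : ℝ → ℝ} (hg : Continuous g) (hg1 : Continuous g1)
    (hgd : ∀ u, 0 < u → HasDerivAt g (g1 u) u) (hm : Continuous m)
    (heq : ∀ u, 0 < u → m u = φ * cv m g u + v u)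
    (hv : ∀ u, 0 < u → HasDerivAt v (v1 u) u) (hv1 : Continuous v1) :
    ∃ p : ℝ → ℝ, Continuous p ∧ (∀ u, 0 < u → HasDerivAt m (p u) u) ∧
      p 0 = φ * m 0 * g 0 + v1 0 ∧
      ∀ u, 0 < u → p u = φ * cv p g u + (φ * m 0 * g u + v1 u) := by
  have hgi : ∀ s t : ℝ, IntervalIntegrable g volume s t := hg.intervalIntegrable
  have hg1i : ∀ s t : ℝ, IntervalIntegrable g1 volume s t := hg1.intervalIntegrable
  have hcc := cv_continuous hm hg1i
  set p : ℝ → ℝ := fun u => φ * (g 0 * m u + cv m g1 u) + v1 u with hp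
  have hpc : Continuous p := by fun_prop
  have hpi : ∀ s t : ℝ, IntervalIntegrable p volume s t := hpc.intervalIntegrable
  have hmd : ∀ u, 0 < u → HasDerivAt m (p u) u := by
    intro u hu
    have h1 := ((cv_hasDeriv hm hg hg1i hgd hu).const_mul φ).add (hv u hu)
    refine h1.congr_of_eventuallyEq ?_
    filter_upwards [Ioi_mem_nhds hu] with x hx
    exact heq x hx
  refine ⟨p, hpc, hmd, ?_, ?_⟩
  · simp only [hp, cv, intervalIntegral.integral_same]; ring
  · intro u hu
    have h1 := ((cv_hasDeriv hg hm hpi hmd hu).const_mul φ).add (hv u hu)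
    have h2 : HasDerivAt m (φ * (m 0 * g u + cv g p u) + v1 u) u := by
      refine h1.congr_of_eventuallyEq ?_
      filter_upwards [Ioi_mem_nhds hu] with x hx
      rw [heq x hx, cv_comm]; rfl
    rw [(hmd u hu).unique h2, cv_comm]; ring

lemma renewal_cont {φ : ℝ} {g m v : ℝ → ℝ} (hg : Continuous g)
    (hm : ∀ x : ℝ, 0 < x → ∃ M, ∀ u ∈ Set.Icc (0:ℝ) x, |m u| ≤ M)
    (hv : ContinuousOn v (Set.Ici 0))
    (heq : ∀ u, 0 ≤ u → m u = φ * cv m g u + v u) : ContinuousOn m (Set.Ici 0) := by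
  set G : ℝ → ℝ → ℝ := fun u => (Set.Ioo 0 u).indicator (fun x => m x * g (u - x)) with hG
  have hcv : ∀ u, 0 ≤ u → cv m g u = ∫ x, G u x := by
    intro u hu
    rw [cv_comm, cv, intervalIntegral.integral_of_le hu, integral_Ioc_eq_integral_Ioo,
      hG, integral_indicator measurableSet_Ioo]
    simp only [mul_comm]
  have hbound : ∀ K, 0 < K → ∃ C, ∀ u ∈ Set.Icc 0 K, ∀ x,
      ‖G u x‖ ≤ (Set.Ioo 0 K).indicator (fun _ => C) x := by
    intro K hK
    obtain ⟨M, hM⟩ := hm K hK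
    obtain ⟨C, hC0, hC⟩ := exists_bdd_icc hg 0 K
    have hM0 : 0 ≤ M := (abs_nonneg _).trans (hM 0 ⟨le_rfl, hK.le⟩)
    refine ⟨M * C, fun u hu x => ?_⟩
    by_cases hx : x ∈ Set.Ioo 0 u
    · have hx' : x ∈ Set.Ioo 0 K := ⟨hx.1, hx.2.trans_le hu.2⟩
      simp only [hG, Set.indicator_of_mem hx, Set.indicator_of_mem hx', norm_mul]
      exact mul_le_mul (hM x ⟨hx'.1.le, hx'.2.le⟩)
        (hC _ ⟨by linarith [hx.2], by linarith [hx.1, hu.2]⟩) (norm_nonneg _) hM0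
    · simp only [hG, Set.indicator_of_notMem hx, norm_zero]
      exact Set.indicator_nonneg (fun _ _ => by positivity) _
  have hconv : ∀ u x, x ≠ u → Tendsto (fun w => G w x) (𝓝 u) (𝓝 (G u x)) := by
    intro u x hxu
    rcases lt_or_gt_of_ne hxu with h | h
    · by_cases hx : 0 < x
      · have e : (fun w => G w x) =ᶠ[𝓝 u] fun w => m x * g (w - x) := by
          filter_upwards [Ioi_mem_nhds h] with w hw
          simp only [hG]
          rw [Set.indicator_of_mem (show x ∈ Set.Ioo 0 w from ⟨hx, hw⟩)]
        refine Tendsto.congr' e.symm ?_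
        rw [e.eq_of_nhds]
        exact (show Continuous fun w => m x * g (w - x) by fun_prop).tendsto u
      · have : ∀ w, G w x = 0 := by
          intro w
          simp only [hG]
          rw [Set.indicator_of_notMem]
          exact fun h => hx h.1
        simp only [this]; exact tendsto_const_nhds
    · have e : (fun w => G w x) =ᶠ[𝓝 u] fun w => 0 := by
        filter_upwards [Iio_mem_nhds h] with w hw
        simp only [hG]
        rw [Set.indicator_of_notMem]
        exact fun h' => lt_asymm h'.2 hw
      refine Tendsto.congr' e.symm ?_
      rw [e.eq_of_nhds]
      exact tendsto_const_nhds
  have hae : ∀ u : ℝ, ∀ᵐ x : ℝ, x ≠ u := fun u => by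
    simp [ae_iff]
  set E : Set ℝ := {u | 0 ≤ u ∧ AEStronglyMeasurable (G u) volume} with hE
  have hEc : IsClosed E := by
    apply IsSeqClosed.isClosed
    intro s u hs hlim
    refine ⟨ge_of_tendsto' hlim fun n => (hs n).1, ?_⟩
    refine aestronglyMeasurable_of_tendsto_ae atTop (fun n => (hs n).2) ?_
    filter_upwards [hae u] with x hx
    exact (hconv u x hx).comp hlim
  have hmE : ContinuousOn m E := by
    intro u hu
    have h1 : ContinuousWithinAt (fun u => φ * (∫ x, G u x) + v u) E u := by
      refine ContinuousWithinAt.add (ContinuousWithinAt.mul continuousWithinAt_const ?_)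
        ((hv u hu.1).mono fun x hx => hx.1)
      obtain ⟨C, hC⟩ := hbound (u + 1) (by linarith [hu.1])
      refine tendsto_integral_filter_of_dominated_convergence
        ((Set.Ioo 0 (u + 1)).indicator (fun _ => C)) ?_ ?_
        ((integrable_indicator_iff measurableSet_Ioo).2
          (integrableOn_const (C := C) (by simp) (by simp))) ?_
      · filter_upwards [self_mem_nhdsWithin] with w hw using hw.2
      · filter_upwards [self_mem_nhdsWithin,
          mem_nhdsWithin_of_mem_nhds (Iio_mem_nhds (lt_add_one u))] with w hw hw2
        exact Eventually.of_forall (hC w ⟨hw.1, le_of_lt hw2⟩)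
      · filter_upwards [hae u] with x hx
        exact (hconv u x hx).mono_left nhdsWithin_le_nhds
    refine h1.congr ?_ ?_
    · intro y hy; rw [heq y hy.1, hcv y hy.1]
    · rw [heq u hu.1, hcv u hu.1]
  have hmeas : AEStronglyMeasurable m (volume.restrict (Set.Ici 0)) := by
    have hsub : Set.Ici (0:ℝ) = E ∪ (Set.Ici 0 \ E) := by
      rw [Set.union_sdiff_cancel]; exact fun x hx => hx.1
    rw [hsub, aestronglyMeasurable_union_iff]
    refine ⟨hmE.aestronglyMeasurable hEc.measurableSet, ?_⟩
    have hmd : MeasurableSet (Set.Ici (0:ℝ) \ E) := measurableSet_Ici.diff hEc.measurableSet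
    have h1 : AEStronglyMeasurable v (volume.restrict (Set.Ici 0 \ E)) :=
      (hv.mono Set.sdiff_subset).aestronglyMeasurable hmd
    refine h1.congr ?_
    filter_upwards [ae_restrict_mem hmd] with x hx
    have hx0 : 0 ≤ x := hx.1
    have : ¬ AEStronglyMeasurable (G x) volume := fun h => hx.2 ⟨hx0, h⟩
    rw [heq x hx0, hcv x hx0, integral_non_aestronglyMeasurable this]
    simp
  have hEall : E = Set.Ici 0 := by
    ext u
    refine ⟨fun h => h.1, fun hu => ⟨hu, ?_⟩⟩
    rw [hG]
    refine (aestronglyMeasurable_indicator_iff measurableSet_Ioo).2 ?_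
    refine AEStronglyMeasurable.mul
      (hmeas.mono_measure (Measure.restrict_mono (fun x hx => hx.1.le) le_rfl)) ?_
    exact (show Continuous fun x => g (u - x) by fun_prop).aestronglyMeasurable
  rw [hEall] at hmE
  exact hmE

lemma cv_bound {a b : ℝ → ℝ} {C u : ℝ} (hC : 0 ≤ C) (hu : 0 ≤ u)
    (ha : ∀ x ∈ Set.Ioo 0 u, |a x| ≤ C) (hb : IntegrableOn (fun y => |b y|) (Set.Ioi 0)) :
    |cv a b u| ≤ C * ∫ y in Set.Ioi (0:ℝ), |b y| := by
  have hae : ∀ᵐ x : ℝ, x ≠ u := by simp [ae_iff]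
  have hbi : IntegrableOn (fun y => |b y|) (Set.Ioc 0 u) := hb.mono_set fun x hx => hx.1
  have hbi' : IntervalIntegrable (fun y => C * |b y|) volume 0 u := by
    rw [intervalIntegrable_iff_integrableOn_Ioc_of_le hu]
    exact hbi.const_mul C
  have h1 : ‖cv a b u‖ ≤ ∫ y in (0:ℝ)..u, C * |b y| := by
    refine intervalIntegral.norm_integral_le_of_norm_le hu ?_ hbi'
    filter_upwards [hae] with x hx hx2
    rw [norm_mul]
    exact mul_le_mul_of_nonneg_right
      (ha _ ⟨by linarith [lt_of_le_of_ne hx2.2 hx], by linarith [hx2.1]⟩) (abs_nonneg _)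
  refine h1.trans ?_
  rw [intervalIntegral.integral_const_mul]
  refine mul_le_mul_of_nonneg_left ?_ hC
  rw [intervalIntegral.integral_of_le hu]
  exact setIntegral_mono_set hb (Eventually.of_forall fun x => abs_nonneg _)
    (Eventually.of_forall fun x hx => hx.1)

lemma renewal_bound {φ M : ℝ} {g q w : ℝ → ℝ} (hφ0 : 0 < φ) (hφ1 : φ < 1)
    (hgi : IntegrableOn (fun y => |g y|) (Set.Ioi 0))
    (hg1 : ∫ y in Set.Ioi (0:ℝ), |g y| = 1) (hq : Continuous q)
    (heq : ∀ u, 0 < u → q u = φ * cv q g u + w u)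
    (hw : ∀ u, 0 < u → |w u| ≤ M) : ∀ u, 0 < u → |q u| ≤ M / (1 - φ) := by
  intro K hK
  obtain ⟨x0, hx0, hmax⟩ := (isCompact_Icc (a := 0) (b := K)).exists_isMaxOn
    ⟨0, le_rfl, hK.le⟩ (hq.abs.continuousOn)
  have hS : ∀ u ∈ Set.Icc 0 K, |q u| ≤ |q x0| := fun u hu => hmax hu
  have h1 : ∀ u ∈ Set.Ioc 0 K, |q u| ≤ φ * |q x0| + M := by
    intro u hu
    rw [heq u hu.1]
    have h2 := cv_bound (abs_nonneg (q x0)) hu.1.le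
      (fun x hx => hS x ⟨hx.1.le, hx.2.le.trans hu.2⟩) hgi
    rw [hg1, mul_one] at h2
    refine (abs_add_le _ _).trans (add_le_add ?_ (hw u hu.1))
    rw [abs_mul, abs_of_pos hφ0]
    exact mul_le_mul_of_nonneg_left h2 hφ0.le
  have h2 : |q x0| ≤ φ * |q x0| + M := by
    rcases eq_or_lt_of_le hx0.1 with h | h
    · have ht : Tendsto (fun u => |q u|) (𝓝[>] 0) (𝓝 |q 0|) :=
        (hq.abs.tendsto 0).mono_left nhdsWithin_le_nhds
      rw [← h]
      rw [← h] at h1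
      refine le_of_tendsto ht ?_
      filter_upwards [Ioc_mem_nhdsGT hK] with u hu using h1 u hu
    · exact h1 x0 ⟨h, hx0.2⟩
  rw [le_div_iff₀ (by linarith)]
  have := hS K ⟨hK.le, le_rfl⟩
  nlinarith

lemma cv_id {a b : ℝ → ℝ} (ha : Continuous a)
    (hb : ∀ s t : ℝ, IntervalIntegrable b volume s t) (u : ℝ) :
    u * cv a b u = cv (fun x => x * a x) b u + cv a (fun y => y * b y) u := by
  have hb2 : ∀ s t : ℝ, IntervalIntegrable (fun y => y * b y) volume s t :=
    fun s t => (hb s t).continuousOn_mul continuousOn_id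
  have hi1 := cv_integrable (a := fun x => x * a x) (by fun_prop) hb u 0 u
  have hi2 := cv_integrable (a := a) (by fun_prop) hb2 u 0 u
  unfold cv
  rw [← intervalIntegral.integral_add hi1 hi2, ← intervalIntegral.integral_const_mul]
  congr 1; ext y; ring

lemma sup_aux (h : ℝ → ℝ) (hh : ∃ M, ∀ u, 0 < u → |h u| ≤ M) :
    ∃ s, 0 ≤ s ∧ (⨆ u ∈ Set.Ioi (0:ℝ), (‖h u‖₊ : ℝ≥0∞)) = ENNReal.ofReal s ∧
      ∀ u, 0 < u → |h u| ≤ s := by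
  obtain ⟨M, hM⟩ := hh
  have hle : (⨆ u ∈ Set.Ioi (0:ℝ), (‖h u‖₊ : ℝ≥0∞)) ≤ ENNReal.ofReal M := by
    refine iSup₂_le fun u hu => ?_
    rw [← enorm_eq_nnnorm, Real.enorm_eq_ofReal_abs]
    exact ENNReal.ofReal_le_ofReal (hM u hu)
  have hne := ne_top_of_le_ne_top ENNReal.ofReal_ne_top hle
  refine ⟨(⨆ u ∈ Set.Ioi (0:ℝ), (‖h u‖₊ : ℝ≥0∞)).toReal, ENNReal.toReal_nonneg,
    (ENNReal.ofReal_toReal hne).symm, fun u hu => ?_⟩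
  have : (‖h u‖₊ : ℝ≥0∞) ≤ ⨆ u ∈ Set.Ioi (0:ℝ), (‖h u‖₊ : ℝ≥0∞) :=
    le_iSup₂ (f := fun u (_ : u ∈ Set.Ioi (0:ℝ)) => (‖h u‖₊ : ℝ≥0∞)) u hu
  have h3 := ENNReal.toReal_mono hne this
  simpa using h3

noncomputable def ext0 (c : ℝ) (f : ℝ → ℝ) : ℝ → ℝ := fun y => if y ≤ 0 then c else f y

lemma ext0_pos (c : ℝ) (f : ℝ → ℝ) {u : ℝ} (hu : 0 < u) : ext0 c f u = f u := by
  simp [ext0, not_le.2 hu]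

lemma ext0_zero (c : ℝ) (f : ℝ → ℝ) : ext0 c f 0 = c := by simp [ext0]

lemma ext0_cont {c : ℝ} {f : ℝ → ℝ} (hf : ContinuousOn f (Set.Ioi 0))
    (hl : Tendsto f (𝓝[>] 0) (𝓝 c)) : Continuous (ext0 c f) := by
  rw [continuous_iff_continuousAt]
  intro u
  rcases lt_trichotomy u 0 with h | h | h
  · refine (continuousAt_const (y := c)).congr ?_
    filter_upwards [Iio_mem_nhds h] with x hx
    simp [ext0, (show x ≤ 0 from le_of_lt hx)]
  · subst h
    rw [continuousAt_iff_continuous_left'_right']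
    constructor
    · refine (continuousWithinAt_const (b := c)).congr ?_ (ext0_zero _ _)
      intro x hx
      simp [ext0, (show x ≤ 0 from le_of_lt hx)]
    · rw [ContinuousWithinAt, ext0_zero]
      refine hl.congr' ?_
      filter_upwards [self_mem_nhdsWithin] with x hx
      exact (ext0_pos c f hx).symm
  · refine (hf.continuousAt (Ioi_mem_nhds h)).congr ?_
    filter_upwards [Ioi_mem_nhds h] with x hx
    exact (ext0_pos c f hx).symm

lemma ext0_deriv {c d : ℝ} {f : ℝ → ℝ} {u : ℝ} (hu : 0 < u) (h : HasDerivAt f d u) :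
    HasDerivAt (ext0 c f) d u := by
  refine h.congr_of_eventuallyEq ?_
  filter_upwards [Ioi_mem_nhds hu] with x hx
  exact ext0_pos c f hx

lemma contDiffOn_step {n : ℕ} {h p : ℝ → ℝ} (hd : ∀ u, 0 < u → HasDerivAt h (p u) u)
    (hp : ContDiffOn ℝ n p (Set.Ioi 0)) : ContDiffOn ℝ (n + 1 : ℕ) h (Set.Ioi 0) := by
  push_cast
  rw [contDiffOn_succ_iff_deriv_of_isOpen isOpen_Ioi]
  refine ⟨fun u hu => (hd u hu).differentiableAt.differentiableWithinAt, by simp, ?_⟩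
  exact hp.congr fun u hu => (hd u hu).deriv

lemma iteratedDeriv_step {n : ℕ} {h p q : ℝ → ℝ} (hn : ∀ u, 0 < u → iteratedDeriv n h u = p u)
    (hd : ∀ u, 0 < u → HasDerivAt p (q u) u) : ∀ u, 0 < u → iteratedDeriv (n + 1) h u = q u := by
  intro u hu
  rw [iteratedDeriv_succ]
  refine ((hd u hu).congr_of_eventuallyEq ?_).deriv
  filter_upwards [Ioi_mem_nhds hu] with x hx using hn x hx

lemma contDiffOn_iter {h : ℝ → ℝ} (j : ℕ) : ∀ k : ℕ, ContDiffOn ℝ (j + k : ℕ) h (Set.Ioi 0) →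
    ContDiffOn ℝ j (iteratedDeriv k h) (Set.Ioi 0) := by
  intro k
  induction k generalizing j with
  | zero => intro hh; simpa using hh
  | succ k ih =>
    intro hh
    rw [iteratedDeriv_succ]
    have := ih (j + 1) (by convert hh using 2; omega)
    push_cast at this
    rw [contDiffOn_succ_iff_deriv_of_isOpen isOpen_Ioi] at this
    exact this.2.2

lemma hasDerivAt_iter {h : ℝ → ℝ} (k : ℕ) (hh : ContDiffOn ℝ (k + 1 : ℕ) h (Set.Ioi 0))
    {u : ℝ} (hu : 0 < u) : HasDerivAt (iteratedDeriv k h) (iteratedDeriv (k + 1) h u) u := by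
  rw [iteratedDeriv_succ]
  apply DifferentiableAt.hasDerivAt
  have := contDiffOn_iter (h := h) 1 k (by rwa [add_comm])
  exact (this.differentiableOn (by simp)).differentiableAt (Ioi_mem_nhds hu)

/-- Weighted bound for a convolution. -/
lemma cv_sq_bound {q b : ℝ → ℝ} {s0 s1 s2 u : ℝ} (hq : Continuous q)
    (hb : ∀ s t : ℝ, IntervalIntegrable b volume s t)
    (hb0 : IntegrableOn (fun y => |b y|) (Set.Ioi 0))
    (hb1 : IntegrableOn (fun y => |y * b y|) (Set.Ioi 0))
    (hb2 : IntegrableOn (fun y => |y * (y * b y)|) (Set.Ioi 0))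
    (h00 : 0 ≤ s0) (h01 : 0 ≤ s1) (h02 : 0 ≤ s2)
    (hs0 : ∀ x, 0 < x → |q x| ≤ s0) (hs1 : ∀ x, 0 < x → |x * q x| ≤ s1)
    (hs2 : ∀ x, 0 < x → |x ^ 2 * q x| ≤ s2) (hu : 0 < u) :
    |u ^ 2 * cv q b u| ≤ s2 * (∫ y in Set.Ioi (0:ℝ), |b y|)
      + 2 * (s1 * ∫ y in Set.Ioi (0:ℝ), |y * b y|)
      + s0 * (∫ y in Set.Ioi (0:ℝ), |y * (y * b y)|) := by
  have hby : ∀ s t : ℝ, IntervalIntegrable (fun y => y * b y) volume s t :=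
    fun s t => (hb s t).continuousOn_mul continuousOn_id
  have e : u ^ 2 * cv q b u = cv (fun x => x * (x * q x)) b u
      + 2 * cv (fun x => x * q x) (fun y => y * b y) u + cv q (fun y => y * (y * b y)) u := by
    rw [pow_two, mul_assoc, cv_id hq hb, mul_add, cv_id (a := fun x => x * q x) (by fun_prop) hb,
      cv_id hq hby]
    ring
  rw [e]
  have b2 := cv_bound (a := fun x => x * (x * q x)) h02 hu.le
    (fun x hx => by have := hs2 x hx.1; rwa [pow_two, mul_assoc] at this) hb0
  have b1 := cv_bound (a := fun x => x * q x) h01 hu.le (fun x hx => hs1 x hx.1) hb1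
  have b0 := cv_bound (a := q) h00 hu.le (fun x hx => hs0 x hx.1) hb2
  refine (abs_add_le _ _).trans (add_le_add ((abs_add_le _ _).trans (add_le_add b2 ?_)) b0)
  rw [abs_mul, abs_two]
  linarith

/-- Weighted bounds for the solution of a renewal equation. -/
lemma renewal_weighted {φ M0 M1 M2 : ℝ} {g q w : ℝ → ℝ} (hφ0 : 0 < φ) (hφ1 : φ < 1)
    (hgc : Continuous g)
    (hgi : IntegrableOn (fun y => |g y|) (Set.Ioi 0))
    (hg1 : ∫ y in Set.Ioi (0:ℝ), |g y| = 1)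
    (hgi1 : IntegrableOn (fun y => |y * g y|) (Set.Ioi 0))
    (hgi2 : IntegrableOn (fun y => |y * (y * g y)|) (Set.Ioi 0))
    (hq : Continuous q)
    (heq : ∀ u, 0 < u → q u = φ * cv q g u + w u)
    (hw0 : ∀ u, 0 < u → |w u| ≤ M0) (hw1 : ∀ u, 0 < u → |u * w u| ≤ M1)
    (hw2 : ∀ u, 0 < u → |u ^ 2 * w u| ≤ M2) :
    (∃ M, ∀ u, 0 < u → |q u| ≤ M) ∧ (∃ M, ∀ u, 0 < u → |u * q u| ≤ M) ∧
      (∃ M, ∀ u, 0 < u → |u ^ 2 * q u| ≤ M) := by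
  have hgI : ∀ s t : ℝ, IntervalIntegrable g volume s t := hgc.intervalIntegrable
  have hgyI : ∀ s t : ℝ, IntervalIntegrable (fun y => y * g y) volume s t :=
    fun s t => (hgI s t).continuousOn_mul continuousOn_id
  have B0 := renewal_bound hφ0 hφ1 hgi hg1 hq heq hw0
  have hC0 : 0 ≤ M0 / (1 - φ) := (abs_nonneg _).trans (B0 1 one_pos)
  set C0 := M0 / (1 - φ)
  have heq1 : ∀ u, 0 < u → u * q u = φ * cv (fun x => x * q x) g u
      + (φ * cv q (fun y => y * g y) u + u * w u) := by
    intro u hu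
    have := cv_id hq hgI u
    rw [heq u hu]
    linear_combination φ * this
  have hcb1 : ∀ u, 0 < u → |cv q (fun y => y * g y) u| ≤ C0 * ∫ y in Set.Ioi (0:ℝ), |y * g y| :=
    fun u hu => cv_bound hC0 hu.le (fun x hx => B0 x hx.1) hgi1
  have hcb2 : ∀ u, 0 < u → |cv q (fun y => y * (y * g y)) u|
      ≤ C0 * ∫ y in Set.Ioi (0:ℝ), |y * (y * g y)| :=
    fun u hu => cv_bound hC0 hu.le (fun x hx => B0 x hx.1) hgi2
  set J1 := ∫ y in Set.Ioi (0:ℝ), |y * g y|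
  set J2 := ∫ y in Set.Ioi (0:ℝ), |y * (y * g y)|
  have B1 := renewal_bound (M := φ * (C0 * J1) + M1) hφ0 hφ1 hgi hg1
    (q := fun x => x * q x) (by fun_prop) heq1 (by
      intro u hu
      refine (abs_add_le _ _).trans (add_le_add ?_ (hw1 u hu))
      rw [abs_mul, abs_of_pos hφ0]
      exact mul_le_mul_of_nonneg_left (hcb1 u hu) hφ0.le)
  set C1 := (φ * (C0 * J1) + M1) / (1 - φ)
  have hC1 : 0 ≤ C1 := (abs_nonneg _).trans (B1 1 one_pos)
  have hcb3 : ∀ u, 0 < u → |cv (fun x => x * q x) (fun y => y * g y) u| ≤ C1 * J1 :=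
    fun u hu => cv_bound (a := fun x => x * q x) hC1 hu.le (fun x hx => B1 x hx.1) hgi1
  have heq2 : ∀ u, 0 < u → u * (u * q u) = φ * cv (fun x => x * (x * q x)) g u
      + (φ * (2 * cv (fun x => x * q x) (fun y => y * g y) u + cv q (fun y => y * (y * g y)) u)
        + u ^ 2 * w u) := by
    intro u hu
    have h1 := cv_id (a := fun x => x * q x) (by fun_prop) hgI u
    have h2 := cv_id hq hgyI u
    rw [heq1 u hu]
    linear_combination φ * h1 + φ * h2
  have B2 := renewal_bound (M := φ * (2 * (C1 * J1) + C0 * J2) + M2) hφ0 hφ1 hgi hg1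
    (q := fun x => x * (x * q x)) (by fun_prop) heq2 (by
      intro u hu
      refine (abs_add_le _ _).trans (add_le_add ?_ (hw2 u hu))
      rw [abs_mul, abs_of_pos hφ0]
      refine mul_le_mul_of_nonneg_left ?_ hφ0.le
      refine (abs_add_le _ _).trans (add_le_add ?_ (hcb2 u hu))
      rw [abs_mul, abs_two]
      linarith [hcb3 u hu])
  refine ⟨⟨_, B0⟩, ⟨_, B1⟩,
    ⟨(φ * (2 * (C1 * J1) + C0 * J2) + M2) / (1 - φ), fun u hu => ?_⟩⟩
  rw [pow_two, mul_assoc]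
  exact B2 u hu

/-- Landau type bound for the first derivative. -/
lemma landau {c M N : ℝ} {h r s : ℝ → ℝ} (hc : 0 ≤ c)
    (hh : ∀ u, 0 < u → HasDerivAt h (r u) u) (hr : ∀ u, 0 < u → HasDerivAt r (s u) u)
    (hM : ∀ u, 0 < u → |u ^ 2 * h u| ≤ M)
    (hN : ∀ u, 0 < u → |u ^ 2 * (s u - c * r u)| ≤ N) :
    ∀ u, 0 < u → |u ^ 2 * r u| ≤ 2 * M + 2 * (c * M) + N := by
  intro u hu
  have hmono : ∀ x y : ℝ, ∀ K, u ≤ x → |x ^ 2 * y| ≤ K → u ^ 2 * |y| ≤ K := by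
    intro x y K hx hK
    rw [abs_mul, abs_of_nonneg (sq_nonneg x)] at hK
    refine le_trans (mul_le_mul_of_nonneg_right ?_ (abs_nonneg y)) hK
    nlinarith
  obtain ⟨ξ, hξ, e1⟩ := exists_hasDerivAt_eq_slope h r (lt_add_one u)
    (fun x hx => (hh x (by linarith [hx.1])).continuousAt.continuousWithinAt)
    (fun x hx => hh x (by linarith [hx.1]))
  have hξ0 : 0 < ξ := by linarith [hξ.1]
  have hk : ∀ x, 0 < x → HasDerivAt (fun x => r x - c * h x) (s x - c * r x) x :=
    fun x hx => (hr x hx).sub ((hh x hx).const_mul c)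
  obtain ⟨η, hη, e2⟩ := exists_hasDerivAt_eq_slope (fun x => r x - c * h x)
    (fun x => s x - c * r x) hξ.1
    (fun x hx => (hk x (by linarith [hx.1])).continuousAt.continuousWithinAt)
    (fun x hx => hk x (by linarith [hx.1]))
  have hη0 : 0 < η := by linarith [hη.1]
  rw [add_sub_cancel_left, div_one] at e1
  rw [eq_div_iff (by linarith [hξ.1])] at e2
  have k1 := hmono (u + 1) (h (u + 1)) M (by linarith) (hM _ (by linarith))
  have k2 := hmono u (h u) M le_rfl (hM _ hu)
  have k3 := hmono ξ (h ξ) M hξ.1.le (hM _ hξ0)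
  have k4 := hmono η _ N hη.1.le (hN _ hη0)
  have e3 : r u = h (u + 1) - h u - c * h ξ + c * h u - (s η - c * r η) * (ξ - u) := by
    rw [e2, ← e1]; ring
  rw [abs_mul, abs_of_nonneg (sq_nonneg u)]
  have k5 : |(s η - c * r η) * (ξ - u)| ≤ |s η - c * r η| := by
    rw [abs_mul, abs_of_pos (by linarith [hξ.1] : 0 < ξ - u)]
    exact mul_le_of_le_one_right (abs_nonneg _) (by linarith [hξ.2])
  have k6 : |r u| ≤ |h (u + 1)| + |h u| + c * |h ξ| + c * |h u| + |s η - c * r η| := by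
    rw [e3]
    have a1 := abs_sub (h (u + 1) - h u - c * h ξ + c * h u) ((s η - c * r η) * (ξ - u))
    have a2 := abs_add_le (h (u + 1) - h u - c * h ξ) (c * h u)
    have a3 := abs_sub (h (u + 1) - h u) (c * h ξ)
    have a4 := abs_sub (h (u + 1)) (h u)
    rw [abs_mul, abs_of_nonneg hc] at a2 a3
    linarith
  have k7 := mul_le_mul_of_nonneg_left k6 (sq_nonneg u)
  have k8 := mul_le_mul_of_nonneg_left k3 hc
  have k9 := mul_le_mul_of_nonneg_left k2 hc
  nlinarith

/-- under conditions (1)-(6) on the defective renewal equation,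
`m` is four times continuously differentiable on `(0,∞)` and
`‖u² m⁗(u)‖ ≤ φ((I₀(f'') + |f'(0)|)‖u² m''(u)‖ + 2 I₁(f'')‖u m''(u)‖ + I₂(f'')‖m''‖)
 + φ f(0) ‖u² m'''(u)‖ + ‖u² w₂''(u)‖ < ∞`,
all suprema being over `(0,∞)` and computed in `ℝ≥0∞`. -/
theorem stmt_13 (φ : ℝ) (hφ0 : 0 < φ) (hφ1 : φ < 1)
    (f F v m : ℝ → ℝ)
    (hf_nonneg : ∀ u : ℝ, 0 < u → 0 ≤ f u)
    (hf_integrable : MeasureTheory.IntegrableOn f (Set.Ioi 0))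
    (hf_total : ∫ y in Set.Ioi (0:ℝ), f y = 1)
    (hF_def : ∀ u : ℝ, 0 ≤ u → F u = ∫ y in (0:ℝ)..u, f y)
    (hFf : ∀ u : ℝ, 0 < u → HasDerivAt F (f u) u)
    (hv_loc : ∀ x : ℝ, 0 < x → ∃ M, ∀ u ∈ Set.Icc (0:ℝ) x, |v u| ≤ M)
    (hm_loc : ∀ x : ℝ, 0 < x → ∃ M, ∀ u ∈ Set.Icc (0:ℝ) x, |m u| ≤ M)
    (hm_eq : ∀ u : ℝ, 0 ≤ u →
      m u = φ * (∫ y in (0:ℝ)..u, m (u - y) * f y) + v u)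
    -- Condition 1: `Z` has finite variance
    (hZ1 : MeasureTheory.IntegrableOn (fun y => y * f y) (Set.Ioi 0))
    (hZ2 : MeasureTheory.IntegrableOn (fun y => y ^ 2 * f y) (Set.Ioi 0))
    -- Condition 2: `F, v ∈ C²₀([0,∞))`
    (hF_c : ContinuousOn F (Set.Ici 0)) (hF_cd : ContDiffOn ℝ 2 F (Set.Ioi 0))
    (hF_lim : ∀ k ≤ 2, ∃ L, Tendsto (iteratedDeriv k F) (𝓝[>] (0:ℝ)) (𝓝 L))
    (hv_c : ContinuousOn v (Set.Ici 0)) (hv_cd : ContDiffOn ℝ 2 v (Set.Ioi 0))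
    (hv_lim : ∀ k ≤ 2, ∃ L, Tendsto (iteratedDeriv k v) (𝓝[>] (0:ℝ)) (𝓝 L))
    (f0 f'0 v'0 : ℝ)
    (hf0 : Tendsto f (𝓝[>] (0:ℝ)) (𝓝 f0))
    (hv'0 : Tendsto (deriv v) (𝓝[>] (0:ℝ)) (𝓝 v'0))
    -- Condition 3: `f'` and `v''` belong to `C²([0,∞))`
    (hf_cd3 : ContDiffOn ℝ 3 f (Set.Ioi 0))
    (hf'0 : Tendsto (deriv f) (𝓝[>] (0:ℝ)) (𝓝 f'0))
    (hv_cd4 : ContDiffOn ℝ 4 v (Set.Ioi 0))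
    (hv''0 : ∃ L, Tendsto (iteratedDeriv 2 v) (𝓝[>] (0:ℝ)) (𝓝 L))
    -- Condition 4: `I₀(f'') < ∞` and `I₂(f'') < ∞`
    (h4a : MeasureTheory.IntegrableOn (fun y => |iteratedDeriv 2 f y|) (Set.Ioi 0))
    (h4b : MeasureTheory.IntegrableOn (fun y => y ^ 2 * |iteratedDeriv 2 f y|)
      (Set.Ioi 0))
    -- Condition 5: `‖u² w₁(u)‖ < ∞` and `‖u² w₂(u)‖ < ∞`
    (h5a : ∃ M, ∀ u : ℝ, 0 < u → |u ^ 2 * w1 φ v f u| ≤ M)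
    (h5b : ∃ M, ∀ u : ℝ, 0 < u → |u ^ 2 * w2 φ f0 v'0 v f u| ≤ M)
    -- Condition 6: `‖u² w₁''(u)‖ < ∞` and `‖u² w₂''(u)‖ < ∞`
    (h6a : ∃ M, ∀ u : ℝ, 0 < u → |u ^ 2 * iteratedDeriv 2 (w1 φ v f) u| ≤ M)
    (h6b : ∃ M, ∀ u : ℝ, 0 < u → |u ^ 2 * iteratedDeriv 2 (w2 φ f0 v'0 v f) u| ≤ M) :
    ContDiffOn ℝ 4 m (Set.Ioi 0) ∧
    ∀ B : ℝ≥0∞,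
      B = ENNReal.ofReal φ *
            (ENNReal.ofReal ((∫ y in Set.Ioi (0:ℝ), |iteratedDeriv 2 f y|) + |f'0|)
                * (⨆ u ∈ Set.Ioi (0:ℝ), (‖u ^ 2 * iteratedDeriv 2 m u‖₊ : ℝ≥0∞))
              + 2 * ENNReal.ofReal (∫ y in Set.Ioi (0:ℝ), y * |iteratedDeriv 2 f y|)
                * (⨆ u ∈ Set.Ioi (0:ℝ), (‖u * iteratedDeriv 2 m u‖₊ : ℝ≥0∞))
              + ENNReal.ofReal (∫ y in Set.Ioi (0:ℝ), y ^ 2 * |iteratedDeriv 2 f y|)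
                * (⨆ u ∈ Set.Ioi (0:ℝ), (‖iteratedDeriv 2 m u‖₊ : ℝ≥0∞)))
          + ENNReal.ofReal (φ * f0)
            * (⨆ u ∈ Set.Ioi (0:ℝ), (‖u ^ 2 * iteratedDeriv 3 m u‖₊ : ℝ≥0∞))
          + (⨆ u ∈ Set.Ioi (0:ℝ),
              (‖u ^ 2 * iteratedDeriv 2 (w2 φ f0 v'0 v f) u‖₊ : ℝ≥0∞)) →
      (⨆ u ∈ Set.Ioi (0:ℝ), (‖u ^ 2 * iteratedDeriv 4 m u‖₊ : ℝ≥0∞)) ≤ B ∧ B < ⊤ := by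
  have hcd_f : ContDiffOn ℝ (3 : ℕ) f (Set.Ioi 0) := by exact_mod_cast hf_cd3
  have hcd_v : ContDiffOn ℝ (4 : ℕ) v (Set.Ioi 0) := by exact_mod_cast hv_cd4
  have hcd_f1 : ContDiffOn ℝ (2 : ℕ) (deriv f) (Set.Ioi 0) := by
    have := contDiffOn_iter (h := f) 2 1 hcd_f
    rwa [iteratedDeriv_one] at this
  have hcd_f2 : ContDiffOn ℝ (1 : ℕ) (iteratedDeriv 2 f) (Set.Ioi 0) :=
    contDiffOn_iter (h := f) 1 2 hcd_f
  have hcd_v1 : ContDiffOn ℝ (3 : ℕ) (deriv v) (Set.Ioi 0) := by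
    have := contDiffOn_iter (h := v) 3 1 hcd_v
    rwa [iteratedDeriv_one] at this
  have hcd_w1 : ContDiffOn ℝ (3 : ℕ) (w1 φ v f) (Set.Ioi 0) := by
    unfold w1
    exact (contDiffOn_const.mul hcd_f).add hcd_v1
  have hcd_w1d : ContDiffOn ℝ (2 : ℕ) (deriv (w1 φ v f)) (Set.Ioi 0) := by
    have := contDiffOn_iter (h := w1 φ v f) 2 1 hcd_w1
    rwa [iteratedDeriv_one] at this
  have hcd_w2 : ContDiffOn ℝ (2 : ℕ) (w2 φ f0 v'0 v f) (Set.Ioi 0) := by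
    unfold w2
    exact (contDiffOn_const.mul (hcd_f.of_le (by norm_num))).add hcd_w1d
  have hd_f : ∀ u, 0 < u → HasDerivAt f (deriv f u) u := fun u hu => by
    have := hasDerivAt_iter (h := f) 0 (hcd_f.of_le (by norm_num)) hu
    rwa [iteratedDeriv_zero, zero_add, iteratedDeriv_one] at this
  have hd_f1 : ∀ u, 0 < u → HasDerivAt (deriv f) (iteratedDeriv 2 f u) u := fun u hu => by
    have := hasDerivAt_iter (h := f) 1 (hcd_f.of_le (by norm_num)) hu
    rwa [iteratedDeriv_one] at this
  have hd_v : ∀ u, 0 < u → HasDerivAt v (deriv v u) u := fun u hu => by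
    have := hasDerivAt_iter (h := v) 0 (hcd_v.of_le (by norm_num)) hu
    rwa [iteratedDeriv_zero, zero_add, iteratedDeriv_one] at this
  have hd_v1 : ∀ u, 0 < u → HasDerivAt (deriv v) (iteratedDeriv 2 v u) u := fun u hu => by
    have := hasDerivAt_iter (h := v) 1 (hcd_v.of_le (by norm_num)) hu
    rwa [iteratedDeriv_one] at this
  have hd_w1' : ∀ u, 0 < u → HasDerivAt (w1 φ v f)
      (φ * v 0 * deriv f u + iteratedDeriv 2 v u) u := fun u hu =>
    ((hd_f u hu).const_mul (φ * v 0)).add (hd_v1 u hu)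
  have hd_w1 : ∀ u, 0 < u → HasDerivAt (w1 φ v f) (deriv (w1 φ v f) u) u := fun u hu =>
    (hd_w1' u hu).differentiableAt.hasDerivAt
  have hd_w2 : ∀ u, 0 < u → HasDerivAt (w2 φ f0 v'0 v f) (deriv (w2 φ f0 v'0 v f) u) u :=
    fun u hu => by
      have := hasDerivAt_iter (h := w2 φ f0 v'0 v f) 0 (hcd_w2.of_le (by norm_num)) hu
      rwa [iteratedDeriv_zero, zero_add, iteratedDeriv_one] at this
  have hd_w2d : ∀ u, 0 < u → HasDerivAt (deriv (w2 φ f0 v'0 v f))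
      (iteratedDeriv 2 (w2 φ f0 v'0 v f) u) u := fun u hu => by
    have := hasDerivAt_iter (h := w2 φ f0 v'0 v f) 1 (hcd_w2.of_le (by norm_num)) hu
    rwa [iteratedDeriv_one] at this
  obtain ⟨L, hL⟩ := hv''0
  have hlim_w1d : Tendsto (deriv (w1 φ v f)) (𝓝[>] 0) (𝓝 (φ * v 0 * f'0 + L)) := by
    refine ((hf'0.const_mul (φ * v 0)).add hL).congr' ?_
    filter_upwards [self_mem_nhdsWithin] with u hu
    exact (hd_w1' u hu).deriv.symm
  -- continuous extensions
  set g : ℝ → ℝ := ext0 f0 f with hg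
  set g1 : ℝ → ℝ := ext0 f'0 (deriv f) with hg1
  set b : ℝ → ℝ := (Set.Ioi 0).indicator (iteratedDeriv 2 f) with hb
  have hgc : Continuous g := ext0_cont hcd_f.continuousOn hf0
  have hg1c : Continuous g1 := ext0_cont hcd_f1.continuousOn hf'0
  have hg0 : g 0 = f0 := ext0_zero _ _
  have hg10 : g1 0 = f'0 := ext0_zero _ _
  have hgf : ∀ u, 0 < u → g u = f u := fun u hu => ext0_pos _ _ hu
  have hbf : ∀ u, 0 < u → b u = iteratedDeriv 2 f u := fun u hu =>
    Set.indicator_of_mem (show u ∈ Set.Ioi 0 from hu) _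
  have hgd : ∀ u, 0 < u → HasDerivAt g (g1 u) u := fun u hu => by
    rw [hg1, ext0_pos _ _ hu]
    exact ext0_deriv hu (hd_f u hu)
  have hg1d : ∀ u, 0 < u → HasDerivAt g1 (b u) u := fun u hu => by
    rw [hbf u hu]
    exact ext0_deriv hu (hd_f1 u hu)
  have hbInt : Integrable b := by
    rw [hb, integrable_indicator_iff measurableSet_Ioi]
    exact (integrable_norm_iff
      (hcd_f2.continuousOn.aestronglyMeasurable measurableSet_Ioi)).1 h4a
  have hbI : ∀ s t : ℝ, IntervalIntegrable b volume s t := fun s t => hbInt.intervalIntegrable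
  have hg1I : ∀ s t : ℝ, IntervalIntegrable g1 volume s t := hg1c.intervalIntegrable
  -- integrals
  have eg0 : Set.EqOn (fun y => |g y|) f (Set.Ioi 0) := fun y hy => by
    simp only [hgf y hy, abs_of_nonneg (hf_nonneg y hy)]
  have eg1 : Set.EqOn (fun y => |y * g y|) (fun y => y * f y) (Set.Ioi 0) := fun y hy => by
    have h0 := hf_nonneg y hy
    have h1 : 0 < y := hy
    simp only [hgf y hy]
    exact abs_of_nonneg (by positivity)
  have eg2 : Set.EqOn (fun y => |y * (y * g y)|) (fun y => y ^ 2 * f y) (Set.Ioi 0) :=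
    fun y hy => by
      have h0 := hf_nonneg y hy
      have h1 : 0 < y := hy
      simp only [hgf y hy]
      rw [abs_of_nonneg (by positivity)]; ring
  have eb0 : Set.EqOn (fun y => |b y|) (fun y => |iteratedDeriv 2 f y|) (Set.Ioi 0) :=
    fun y hy => by simp only [hbf y hy]
  have eb1 : Set.EqOn (fun y => |y * b y|) (fun y => y * |iteratedDeriv 2 f y|) (Set.Ioi 0) :=
    fun y hy => by
      have h1 : 0 < y := hy
      simp only [hbf y hy, abs_mul, abs_of_pos h1]
  have eb2 : Set.EqOn (fun y => |y * (y * b y)|) (fun y => y ^ 2 * |iteratedDeriv 2 f y|)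
      (Set.Ioi 0) := fun y hy => by
    have h1 : 0 < y := hy
    simp only [hbf y hy, abs_mul, abs_of_pos h1]; ring
  have ig0 : IntegrableOn (fun y => |g y|) (Set.Ioi 0) :=
    hf_integrable.congr_fun eg0.symm measurableSet_Ioi
  have ig1 : IntegrableOn (fun y => |y * g y|) (Set.Ioi 0) :=
    hZ1.congr_fun eg1.symm measurableSet_Ioi
  have ig2 : IntegrableOn (fun y => |y * (y * g y)|) (Set.Ioi 0) :=
    hZ2.congr_fun eg2.symm measurableSet_Ioi
  have ib0 : IntegrableOn (fun y => |b y|) (Set.Ioi 0) :=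
    h4a.congr_fun eb0.symm measurableSet_Ioi
  have ib2 : IntegrableOn (fun y => |y * (y * b y)|) (Set.Ioi 0) :=
    h4b.congr_fun eb2.symm measurableSet_Ioi
  have ib1 : IntegrableOn (fun y => |y * b y|) (Set.Ioi 0) := by
    refine Integrable.mono' (ib0.add ib2) ?_ ?_
    · exact ((measurable_id.aestronglyMeasurable).mul
        hbInt.aestronglyMeasurable.restrict).norm
    · filter_upwards [ae_restrict_mem measurableSet_Ioi] with y hy
      have h1 : 0 < y := hy
      simp only [Pi.add_apply, Real.norm_eq_abs, abs_abs, abs_mul, abs_of_pos h1]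
      nlinarith [abs_nonneg (b y), mul_nonneg (sq_nonneg (y - 1)) (abs_nonneg (b y)),
        mul_nonneg (sq_nonneg y) (abs_nonneg (b y))]
  have ig : ∫ y in Set.Ioi (0:ℝ), |g y| = 1 := by
    rw [setIntegral_congr_fun measurableSet_Ioi eg0, hf_total]
  have I0e := setIntegral_congr_fun (μ := volume) measurableSet_Ioi eb0
  have I1e := setIntegral_congr_fun (μ := volume) measurableSet_Ioi eb1
  have I2e := setIntegral_congr_fun (μ := volume) measurableSet_Ioi eb2
  -- continuity of the solution
  have heq0 : ∀ u, 0 ≤ u → m u = φ * cv m g u + v u := by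
    intro u hu
    rw [hm_eq u hu, cv]
    congr 2
    apply intervalIntegral.integral_congr_Ioo_of_le hu
    intro y hy
    simp only [hgf y hy.1]
  have hmc : ContinuousOn m (Set.Ici 0) := renewal_cont hgc hm_loc hv_c heq0
  have hm0 : m 0 = v 0 := by
    rw [heq0 0 le_rfl, cv, intervalIntegral.integral_same]; ring
  set mm : ℝ → ℝ := ext0 (m 0) m with hmm
  have hmmc : Continuous mm := ext0_cont (hmc.mono Set.Ioi_subset_Ici_self)
    ((hmc 0 Set.self_mem_Ici).mono_left (nhdsWithin_mono _ Set.Ioi_subset_Ici_self))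
  have hmm0 : mm 0 = v 0 := by rw [hmm, ext0_zero, hm0]
  have heqm : ∀ u, 0 < u → mm u = φ * cv mm g u + v u := by
    intro u hu
    rw [hmm, ext0_pos _ _ hu, heq0 u hu.le]
    congr 2
    apply intervalIntegral.integral_congr_Ioo_of_le hu.le
    intro y hy
    have : 0 < u - y := by linarith [hy.2]
    simp only [ext0_pos _ _ this]
  -- first derivative
  obtain ⟨p, hpc, hpd, hp0, hpeq⟩ := renewal_step (v1 := ext0 v'0 (deriv v)) hgc hg1c hgd hmmc heqm
    (fun u hu => by rw [ext0_pos _ _ hu]; exact hd_v u hu)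
    (ext0_cont hcd_v1.continuousOn hv'0)
  rw [ext0_zero, hmm0, hg0] at hp0
  have hpeq' : ∀ u, 0 < u → p u = φ * cv p g u + w1 φ v f u := by
    intro u hu
    rw [hpeq u hu, hmm0, hgf u hu, ext0_pos _ _ hu]; rfl
  -- second derivative
  obtain ⟨q, hqc, hqd, -, hqeq⟩ := renewal_step
    (v1 := ext0 (φ * v 0 * f'0 + L) (deriv (w1 φ v f))) hgc hg1c hgd hpc hpeq'
    (fun u hu => by rw [ext0_pos _ _ hu]; exact hd_w1 u hu)
    (ext0_cont hcd_w1d.continuousOn hlim_w1d)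
  have hqeq' : ∀ u, 0 < u → q u = φ * cv q g u + w2 φ f0 v'0 v f u := by
    intro u hu
    rw [hqeq u hu, hp0, hgf u hu, ext0_pos _ _ hu]; rfl
  -- third and fourth derivatives
  set W : ℝ → ℝ := w2 φ f0 v'0 v f with hW
  set r : ℝ → ℝ := fun u => φ * (f0 * q u + cv q g1 u) + deriv W u with hr
  set s : ℝ → ℝ := fun u => φ * (f0 * r u + (f'0 * q u + cv q b u)) + iteratedDeriv 2 W u with hs
  have hqr : ∀ u, 0 < u → HasDerivAt q (r u) u := by
    intro u hu
    have h1 := ((cv_hasDeriv hqc hgc hg1I hgd hu).const_mul φ).add (hd_w2 u hu)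
    rw [hg0] at h1
    refine h1.congr_of_eventuallyEq ?_
    filter_upwards [Ioi_mem_nhds hu] with x hx
    exact hqeq' x hx
  have hrs : ∀ u, 0 < u → HasDerivAt r (s u) u := by
    intro u hu
    have h2 := cv_hasDeriv hqc hg1c hbI hg1d hu
    rw [hg10] at h2
    exact ((((hqr u hu).const_mul f0).add h2).const_mul φ).add (hd_w2d u hu)
  have hmp : ∀ u, 0 < u → HasDerivAt m (p u) u := by
    intro u hu
    refine (hpd u hu).congr_of_eventuallyEq ?_
    filter_upwards [Ioi_mem_nhds hu] with x hx
    exact (ext0_pos _ _ hx).symm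
  have hcvb : Continuous (cv q b) := cv_continuous hqc hbI
  have hsc : ContinuousOn s (Set.Ioi 0) := by
    have hrc : ContinuousOn r (Set.Ioi 0) := fun u hu =>
      (hrs u hu).continuousAt.continuousWithinAt
    have hWc : ContinuousOn (iteratedDeriv 2 W) (Set.Ioi 0) :=
      (contDiffOn_iter (h := W) 0 2 hcd_w2).continuousOn
    rw [hs]
    fun_prop
  have i0 : ∀ u, 0 < u → iteratedDeriv 0 m u = m u := fun u _ => by rw [iteratedDeriv_zero]
  have i1 := iteratedDeriv_step i0 hmp
  have i2 := iteratedDeriv_step i1 hqd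
  have i3 := iteratedDeriv_step i2 hqr
  have i4 := iteratedDeriv_step i3 hrs
  norm_num at i1 i2 i3 i4
  refine ⟨?_, ?_⟩
  · have c0 : ContDiffOn ℝ (0 : ℕ) s (Set.Ioi 0) := by
      rw [Nat.cast_zero, contDiffOn_zero]; exact hsc
    have := contDiffOn_step hmp (contDiffOn_step hqd (contDiffOn_step hqr (contDiffOn_step hrs c0)))
    exact_mod_cast this
  -- bounds
  obtain ⟨M2, hM2⟩ := h5b
  have hWb : ∃ M0, ∀ u, 0 < u → |W u| ≤ M0 := by
    have hc : Continuous fun u => φ * (φ * v 0 * f0 + v'0) * g u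
        + ext0 (φ * v 0 * f'0 + L) (deriv (w1 φ v f)) u :=
      (continuous_const.mul hgc).add (ext0_cont hcd_w1d.continuousOn hlim_w1d)
    obtain ⟨C, hC0, hC⟩ := exists_bdd_icc hc 0 1
    refine ⟨max C M2, fun u hu => ?_⟩
    rcases le_total u 1 with h | h
    · have := hC u ⟨hu.le, h⟩
      rw [hgf u hu, ext0_pos _ _ hu] at this
      exact le_max_of_le_left this
    · refine le_max_of_le_right (le_trans ?_ (hM2 u hu))
      rw [abs_mul, abs_of_nonneg (sq_nonneg u)]
      exact le_mul_of_one_le_left (abs_nonneg _) (by nlinarith)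
  obtain ⟨M0, hM0⟩ := hWb
  have hM1 : ∀ u, 0 < u → |u * W u| ≤ M0 + M2 := by
    intro u hu
    have a0 := hM0 u hu
    have a2 := hM2 u hu
    rw [abs_mul, abs_of_nonneg (sq_nonneg u)] at a2
    rw [abs_mul, abs_of_pos hu]
    nlinarith [abs_nonneg (W u), mul_nonneg (sq_nonneg (u - 1)) (abs_nonneg (W u)),
        mul_nonneg (sq_nonneg u) (abs_nonneg (W u))]
  obtain ⟨Q0, Q1, Q2⟩ := renewal_weighted hφ0 hφ1 hgc ig0 ig ig1 ig2 hqc hqeq' hM0 hM1 hM2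
  have hf0n : 0 ≤ f0 := by
    refine ge_of_tendsto hf0 ?_
    filter_upwards [self_mem_nhdsWithin] with u hu using hf_nonneg u hu
  have conv : ∀ (k : ℕ) (t h : ℝ → ℝ), (∀ u, 0 < u → iteratedDeriv k m u = h u) →
      (∃ M, ∀ u, 0 < u → |t u * h u| ≤ M) →
      ∃ M, ∀ u, 0 < u → |t u * iteratedDeriv k m u| ≤ M := by
    rintro k t h hk ⟨M, hM⟩
    exact ⟨M, fun u hu => by rw [hk u hu]; exact hM u hu⟩
  obtain ⟨s0, hs0, es0, bs0⟩ := sup_aux (fun u => iteratedDeriv 2 m u) (by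
    obtain ⟨M, hM⟩ := Q0
    exact ⟨M, fun u hu => by simp only [i2 u hu]; exact hM u hu⟩)
  obtain ⟨s1, hs1, es1, bs1⟩ := sup_aux _ (conv 2 (fun u => u) q i2 Q1)
  obtain ⟨s2, hs2, es2, bs2⟩ := sup_aux _ (conv 2 (fun u => u ^ 2) q i2 Q2)
  obtain ⟨sw, hsw, esw, bsw⟩ := sup_aux (fun u => u ^ 2 * iteratedDeriv 2 W u) h6b
  have bq0 : ∀ u, 0 < u → |q u| ≤ s0 := fun u hu => by have := bs0 u hu; rwa [i2 u hu] at this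
  have bq1 : ∀ u, 0 < u → |u * q u| ≤ s1 := fun u hu => by
    have := bs1 u hu; rwa [i2 u hu] at this
  have bq2 : ∀ u, 0 < u → |u ^ 2 * q u| ≤ s2 := fun u hu => by
    have := bs2 u hu; rwa [i2 u hu] at this
  set J0 := ∫ y in Set.Ioi (0:ℝ), |iteratedDeriv 2 f y| with hJ0
  set J1 := ∫ y in Set.Ioi (0:ℝ), y * |iteratedDeriv 2 f y| with hJ1
  set J2 := ∫ y in Set.Ioi (0:ℝ), y ^ 2 * |iteratedDeriv 2 f y| with hJ2
  have hJ0n : 0 ≤ J0 := by rw [← I0e]; positivity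
  have hJ1n : 0 ≤ J1 := by rw [← I1e]; positivity
  have hJ2n : 0 ≤ J2 := by rw [← I2e]; positivity
  set N := φ * ((J0 + |f'0|) * s2 + 2 * J1 * s1 + J2 * s0) + sw with hN
  have hNb : ∀ u, 0 < u → |u ^ 2 * (s u - φ * f0 * r u)| ≤ N := by
    intro u hu
    have e : u ^ 2 * (s u - φ * f0 * r u) = φ * (f'0 * (u ^ 2 * q u) + u ^ 2 * cv q b u)
        + u ^ 2 * iteratedDeriv 2 W u := by
      simp only [hs]; ring
    rw [e]
    have c1 := cv_sq_bound hqc hbI ib0 ib1 ib2 hs0 hs1 hs2 bq0 bq1 bq2 hu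
    rw [I0e, I1e, I2e] at c1
    refine (abs_add_le _ _).trans (add_le_add ?_ (bsw u hu))
    rw [abs_mul, abs_of_pos hφ0]
    refine mul_le_mul_of_nonneg_left ?_ hφ0.le
    refine (abs_add_le _ _).trans ?_
    have c2 := mul_le_mul_of_nonneg_left (bq2 u hu) (abs_nonneg f'0)
    rw [abs_mul]
    linarith
  have hc0 : 0 ≤ φ * f0 := by positivity
  obtain ⟨s3, hs3, es3, bs3⟩ := sup_aux _ (conv 3 (fun u => u ^ 2) r i3
    ⟨_, landau hc0 hqr hrs bq2 hNb⟩)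
  have br2 : ∀ u, 0 < u → |u ^ 2 * r u| ≤ s3 := fun u hu => by
    have := bs3 u hu; rwa [i3 u hu] at this
  intro B hB
  rw [es0, es1, es2, es3, esw] at hB
  have hB' : B = ENNReal.ofReal (φ * ((J0 + |f'0|) * s2 + 2 * J1 * s1 + J2 * s0)
      + φ * f0 * s3 + sw) := by
    have key : ∀ X Y : ℝ, 0 ≤ X → 0 ≤ Y →
        ENNReal.ofReal (φ * (X * s2 + 2 * J1 * s1 + J2 * s0) + Y * s3 + sw)
        = ENNReal.ofReal φ * (ENNReal.ofReal X * ENNReal.ofReal s2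
            + 2 * ENNReal.ofReal J1 * ENNReal.ofReal s1
            + ENNReal.ofReal J2 * ENNReal.ofReal s0)
          + ENNReal.ofReal Y * ENNReal.ofReal s3 + ENNReal.ofReal sw := by
      intro X Y hX hY
      rw [ENNReal.ofReal_add (by positivity) hsw,
        ENNReal.ofReal_add (by positivity) (by positivity),
        ENNReal.ofReal_mul hφ0.le, ENNReal.ofReal_add (by positivity) (by positivity),
        ENNReal.ofReal_add (by positivity) (by positivity), ENNReal.ofReal_mul hX,
        ENNReal.ofReal_mul (p := 2 * J1) (by positivity),
        ENNReal.ofReal_mul (p := 2) (by positivity),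
        ENNReal.ofReal_mul (p := J2) hJ2n, ENNReal.ofReal_mul hY]
      norm_num
    rw [hB, key _ _ (by positivity) hc0]
  rw [hB']
  refine ⟨iSup₂_le fun u hu => ?_, ENNReal.ofReal_lt_top⟩
  rw [← enorm_eq_nnnorm, Real.enorm_eq_ofReal_abs, i4 u hu]
  apply ENNReal.ofReal_le_ofReal
  have e : u ^ 2 * s u = u ^ 2 * (s u - φ * f0 * r u) + φ * f0 * (u ^ 2 * r u) := by ring
  rw [e]
  refine (abs_add_le _ _).trans ?_
  have d1 := hNb u hu
  have d2 := mul_le_mul_of_nonneg_left (br2 u hu) hc0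
  rw [abs_mul (φ * f0), abs_of_nonneg hc0]
  linarith
end

section
/- Let g : [0,∞) → ℝ be continuous, four times continuously differentiable on (0,∞), with sup_{u>0} |g''(u)| < ∞ and sup_{u>0} |u² g^{(4)}(u)| < ∞ (i.e. g ∈ D₁). For t > 0 let L_t* g(u) := E[g(S(⌊tu⌋+1)/t)], where S(n) denotes a Gamma(n,1) random variable (equivalently, L_t* g(u) = ∫₀^∞ g(x) · t^{⌊tu⌋+1} x^{⌊tu⌋} e^{−tx}/⌊tu⌋! dx), and define M_t^{[2]} g by: M_t^{[2]} g(0) = g(0); M_t^{[2]} g(k/t) = 2 L_{2t}* g((2k−1)/(2t)) − L_t* g((k−1)/t) for k = 1, 2, …; and M_t^{[2]} g(u) = (tu − ⌊tu⌋) M_t^{[2]} g((⌊tu⌋+1)/t) + (⌊tu⌋+1 − tu) M_t^{[2]} g(⌊tu⌋/t) for u > 0 not of the form k/t. Then sup_{u ≥ 0} |M_t^{[2]} g(u) − g(u)| ≤ (1/(8t²)) sup_{u>0}|g''(u)| + (1/(6t²)) sup_{u>0}|u g'''(u)| + (9/(16t²)) sup_{u>0}|u² g^{(4)}(u)| < ∞.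 -/
open MeasureTheory Filter Topology
open scoped ENNReal

/-- The gamma-type operator `L_t* g(u) = E[g(S(⌊tu⌋+1)/t)]
= ∫₀^∞ g(x) t^{⌊tu⌋+1} x^{⌊tu⌋} e^{-tx}/⌊tu⌋! dx`. -/
noncomputable def Lstar (t : ℝ) (g : ℝ → ℝ) (u : ℝ) : ℝ :=
  ∫ x in Set.Ioi (0:ℝ),
    g x * (t ^ (⌊t * u⌋₊ + 1) * x ^ ⌊t * u⌋₊ * Real.exp (-t * x)
      / ((⌊t * u⌋₊).factorial : ℝ))

/-- The accelerated approximation on the grid `{k/t : k ∈ ℕ}`: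
`M_t^{[2]} g(0) = g(0)` and
`M_t^{[2]} g(k/t) = 2 L_{2t}* g((2k-1)/(2t)) - L_t* g((k-1)/t)` for `k ≥ 1`. -/
noncomputable def Mgrid (t : ℝ) (g : ℝ → ℝ) : ℕ → ℝ
  | 0 => g 0
  | k + 1 => 2 * Lstar (2 * t) g ((2 * (k : ℝ) + 1) / (2 * t))
      - Lstar t g ((k : ℝ) / t)

/-- The accelerated approximation `M_t^{[2]} g`, extended from the grid by linear
interpolation: `M_t^{[2]} g(u) = (tu - ⌊tu⌋) M_t^{[2]} g((⌊tu⌋+1)/t)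
  + (⌊tu⌋+1 - tu) M_t^{[2]} g(⌊tu⌋/t)` (this formula also reproduces the grid
values when `tu ∈ ℕ`). -/
noncomputable def Mt2 (t : ℝ) (g : ℝ → ℝ) (u : ℝ) : ℝ :=
  (t * u - (⌊t * u⌋₊ : ℝ)) * Mgrid t g (⌊t * u⌋₊ + 1)
    + ((⌊t * u⌋₊ : ℝ) + 1 - t * u) * Mgrid t g ⌊t * u⌋₊

lemma aux_mvt (F F' : ℝ → ℝ) (x y : ℝ) (hx : 0 < x) (hy : 0 < y)
    (h : ∀ u, 0 < u → HasDerivAt F (F' u) u) (hF : F x = 0) (hne : y ≠ x) :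
    ∃ c, 0 < c ∧ 0 < (c - x) * (y - x) ∧ F y = F' c * (y - x) := by
  rcases lt_or_gt_of_ne hne with hlt | hgt
  · obtain ⟨c, hc, he⟩ := exists_hasDerivAt_eq_slope F F' hlt
      (fun z hz => (h z (by linarith [hz.1])).continuousAt.continuousWithinAt)
      (fun z hz => h z (by linarith [hz.1]))
    refine ⟨c, by linarith [hc.1], mul_pos_of_neg_of_neg (by linarith [hc.2]) (by linarith), ?_⟩
    rw [he, hF]
    have : x - y ≠ 0 := (sub_pos.2 hlt).ne'
    field_simp
    ring
  · obtain ⟨c, hc, he⟩ := exists_hasDerivAt_eq_slope F F' hgt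
      (fun z hz => (h z (by linarith [hz.1])).continuousAt.continuousWithinAt)
      (fun z hz => h z (by linarith [hz.1]))
    refine ⟨c, by linarith [hc.1], mul_pos (by linarith [hc.1]) (by linarith), ?_⟩
    rw [he, hF]
    have : y - x ≠ 0 := (sub_pos.2 hgt).ne'
    field_simp
    ring

lemma aux_A (F F' : ℝ → ℝ) (x : ℝ) (hx : 0 < x)
    (h : ∀ u, 0 < u → HasDerivAt F (F' u) u) (hF : F x = 0)
    (hs : ∀ u, 0 < u → 0 ≤ F' u * (u - x)) : ∀ y, 0 < y → 0 ≤ F y := by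
  intro y hy
  by_cases hne : y = x
  · rw [hne, hF]
  obtain ⟨c, hc, h1, h2⟩ := aux_mvt F F' x y hx hy h hF hne
  have h3 := mul_nonneg (hs c hc) h1.le
  have h4 : 0 < (c - x) ^ 2 := by
    have : c - x ≠ 0 := fun h => by simp [h] at h1
    positivity
  rw [h2]
  by_contra hcon
  push Not at hcon
  nlinarith

lemma aux_B (F F' : ℝ → ℝ) (x : ℝ) (hx : 0 < x)
    (h : ∀ u, 0 < u → HasDerivAt F (F' u) u) (hF : F x = 0)
    (hs : ∀ u, 0 < u → 0 ≤ F' u) : ∀ y, 0 < y → 0 ≤ F y * (y - x) := by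
  intro y hy
  by_cases hne : y = x
  · simp [hne]
  obtain ⟨c, hc, h1, h2⟩ := aux_mvt F F' x y hx hy h hF hne
  rw [h2, mul_assoc]
  exact mul_nonneg (hs c hc) (mul_self_nonneg _)

/-- The remainder majorant. -/
noncomputable def phiRem (x y : ℝ) : ℝ :=
  -(1/2) * y ^ 2 * (Real.log y - Real.log x) + 1/2 * x * (y - x) + 3/4 * (y - x) ^ 2
    + (y - x) ^ 3 / (6 * x)

lemma aux_taylor (g g1 g2 g3 g4 : ℝ → ℝ)
    (h0 : ∀ u, 0 < u → HasDerivAt g (g1 u) u)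
    (h1 : ∀ u, 0 < u → HasDerivAt g1 (g2 u) u)
    (h2 : ∀ u, 0 < u → HasDerivAt g2 (g3 u) u)
    (h3 : ∀ u, 0 < u → HasDerivAt g3 (g4 u) u)
    (K : ℝ) (hK : ∀ u, 0 < u → u ^ 2 * g4 u ≤ K) (x : ℝ) (hx : 0 < x) :
    ∀ y, 0 < y → g y - (g x + g1 x * (y - x) + g2 x / 2 * (y - x) ^ 2 + g3 x / 6 * (y - x) ^ 3)
      ≤ K * phiRem x y := by
  have e3 : ∀ u, 0 < u → HasDerivAt (fun y => K * (-y⁻¹ + 1 / x) - (g3 y - g3 x))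
      (K * (1 / u ^ 2) - g4 u) u := by
    intro u hu
    have := (((((hasDerivAt_id u).inv hu.ne').neg).add_const (1 / x)).const_mul K).sub
      ((h3 u hu).sub_const (g3 x))
    refine this.congr_deriv ?_
    simp [neg_div]
  have e2 : ∀ u, 0 < u → HasDerivAt
      (fun y => K * (-(Real.log y - Real.log x) + (y - x) / x) - (g2 y - g2 x - g3 x * (y - x)))
      (K * (-u⁻¹ + 1 / x) - (g3 u - g3 x)) u := by
    intro u hu
    have hw := (hasDerivAt_id u).sub_const x
    have := ((((((Real.hasDerivAt_log hu.ne').sub_const (Real.log x)).neg)).add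
      (hw.div_const x)).const_mul K).sub (((h2 u hu).sub_const (g2 x)).sub (hw.const_mul (g3 x)))
    refine this.congr_deriv ?_
    ring
  have e1 : ∀ u, 0 < u → HasDerivAt
      (fun y => K * (-y * (Real.log y - Real.log x) + (y - x) + (y - x) ^ 2 / (2 * x))
        - (g1 y - g1 x - g2 x * (y - x) - g3 x / 2 * (y - x) ^ 2))
      (K * (-(Real.log u - Real.log x) + (u - x) / x) - (g2 u - g2 x - g3 x * (u - x))) u := by
    intro u hu
    have hid := hasDerivAt_id u
    have hw := hid.sub_const x
    have := (((hid.neg.mul ((Real.hasDerivAt_log hu.ne').sub_const (Real.log x))).add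
      hw).add ((hw.pow 2).div_const (2 * x))).const_mul K |>.sub
      ((((h1 u hu).sub_const (g1 x)).sub (hw.const_mul (g2 x))).sub
        ((hw.pow 2).const_mul (g3 x / 2)))
    refine this.congr_deriv ?_
    simp only [id, Pi.neg_apply]; field_simp; push_cast; ring
  have e0 : ∀ u, 0 < u → HasDerivAt
      (fun y => K * phiRem x y
        - (g y - g x - g1 x * (y - x) - g2 x / 2 * (y - x) ^ 2 - g3 x / 6 * (y - x) ^ 3))
      (K * (-u * (Real.log u - Real.log x) + (u - x) + (u - x) ^ 2 / (2 * x))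
        - (g1 u - g1 x - g2 x * (u - x) - g3 x / 2 * (u - x) ^ 2)) u := by
    intro u hu
    have hid := hasDerivAt_id u
    have hw := hid.sub_const x
    have := (((((hid.pow 2).const_mul (-(1/2))).mul
        ((Real.hasDerivAt_log hu.ne').sub_const (Real.log x))).add
        (hw.const_mul (1/2 * x))).add ((hw.pow 2).const_mul (3/4))).add
        ((hw.pow 3).div_const (6 * x)) |>.const_mul K |>.sub
      (((((h0 u hu).sub_const (g x)).sub (hw.const_mul (g1 x))).sub
        ((hw.pow 2).const_mul (g2 x / 2))).sub ((hw.pow 3).const_mul (g3 x / 6)))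
    refine this.congr_deriv ?_
    simp only [id, Pi.pow_apply]; field_simp; push_cast; ring
  have s3 := aux_B _ _ x hx e3 (by ring) (fun u hu => by
    have := hK u hu
    have h5 : g4 u ≤ K * (1 / u ^ 2) := by
      rw [mul_one_div, le_div_iff₀ (by positivity)]; linarith
    linarith)
  have s2 := aux_A _ _ x hx e2 (by simp) s3
  have s1 := aux_B _ _ x hx e1 (by simp) s2
  have s0 := aux_A _ _ x hx e0 (by simp [phiRem]) s1
  intro y hy
  have := s0 y hy
  linarith

lemma aux_log (p : ℝ → ℝ) (L : ℝ → ℝ)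
    (hp : ∀ u, 0 < u → 0 ≤ p u)
    (h : ∀ u, 0 < u → HasDerivAt L (p u * (u - 1)) u) (h1 : L 1 = 0) :
    ∀ y, 0 < y → 0 ≤ L y :=
  aux_A L _ 1 one_pos h h1 (fun u hu => by
    rw [mul_assoc]; exact mul_nonneg (hp u hu) (mul_self_nonneg _))

lemma phi_le_gen (a b c : ℝ) (q : ℝ → ℝ) (hq : ∀ u, 0 < u → 0 ≤ q u)
    (hqe : ∀ u, 0 < u → 4 * a + 6 * b * (u - 1) + (2 * b + 8 * c - 1 / 3) * (u - 1) ^ 2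
      + 4 * c * (u - 1) ^ 3 = q u) (x y : ℝ) (hx : 0 < x) (hy : 0 < y) :
    phiRem x y ≤ a * (y - x) ^ 2 + b / x * (y - x) ^ 3 + c / x ^ 2 * (y - x) ^ 4 := by
  have key : ∀ z : ℝ, 0 < z → 0 ≤ Real.log z + 2 * (a * (z - 1) ^ 2 + b * (z - 1) ^ 3
      + c * (z - 1) ^ 4 - 1 / 2 * (z - 1) - 3 / 4 * (z - 1) ^ 2 - 1 / 6 * (z - 1) ^ 3) / z ^ 2 := by
    apply aux_log (fun u => q u / u ^ 3)
    · intro u hu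
      exact div_nonneg (hq u hu) (by positivity)
    · intro u hu
      have hid := hasDerivAt_id u
      have hw := hid.sub_const 1
      have := (Real.hasDerivAt_log hu.ne').add (((((((((hw.pow 2).const_mul a).add
        ((hw.pow 3).const_mul b)).add ((hw.pow 4).const_mul c)).sub (hw.const_mul (1/2))).sub
        ((hw.pow 2).const_mul (3/4))).sub ((hw.pow 3).const_mul (1/6))).const_mul 2).div
        (hid.pow 2) (pow_ne_zero 2 hu.ne'))
      refine this.congr_deriv ?_
      rw [← hqe u hu]
      simp
      field_simp
      ring
    · simp
  have := key (y / x) (div_pos hy hx)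
  rw [Real.log_div hy.ne' hx.ne'] at this
  have h2 : 0 ≤ (y ^ 2 / 2) * (Real.log y - Real.log x + 2 * (a * (y / x - 1) ^ 2
      + b * (y / x - 1) ^ 3 + c * (y / x - 1) ^ 4 - 1 / 2 * (y / x - 1) - 3 / 4 * (y / x - 1) ^ 2
      - 1 / 6 * (y / x - 1) ^ 3) / (y / x) ^ 2) := mul_nonneg (by positivity) this
  rw [← sub_nonneg]
  convert h2 using 1
  unfold phiRem
  field_simp
  ring

lemma phi_le0 (x y : ℝ) (hx : 0 < x) (hy : 0 < y) :
    phiRem x y ≤ 0 * (y - x) ^ 2 + 0 / x * (y - x) ^ 3 + (1 / 12) / x ^ 2 * (y - x) ^ 4 :=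
  phi_le_gen 0 0 (1/12) (fun u => (u - 1) ^ 2 * u / 3) (fun u hu => by positivity)
    (fun u hu => by ring) x y hx hy

lemma phi_le1 (x y : ℝ) (hx : 0 < x) (hy : 0 < y) :
    phiRem x y ≤ (1/84) * (y - x) ^ 2 + (-2/84) / x * (y - x) ^ 3
      + (4/84) / x ^ 2 * (y - x) ^ 4 :=
  phi_le_gen (1/84) (-2/84) (4/84) (fun u => u * (1 - 2 * (u - 1)) ^ 2 / 21)
    (fun u hu => by positivity)
    (fun u hu => by ring) x y hx hy

lemma iter_hasDeriv (g : ℝ → ℝ) (hg_cd : ContDiffOn ℝ 4 g (Set.Ioi 0)) (m : ℕ) (hm : m < 4)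
    (u : ℝ) (hu : 0 < u) : HasDerivAt (iteratedDeriv m g) (iteratedDeriv (m + 1) g u) u := by
  rw [iteratedDeriv_succ]
  apply DifferentiableAt.hasDerivAt
  have h := hg_cd.differentiableOn_iteratedDerivWithin (m := m) (by exact_mod_cast hm)
    isOpen_Ioi.uniqueDiffOn
  have h2 := (h u hu).differentiableAt (Ioi_mem_nhds hu)
  refine h2.congr_of_eventuallyEq ?_
  filter_upwards [Ioi_mem_nhds hu] with z hz
  exact (iteratedDerivWithin_of_isOpen isOpen_Ioi hz).symm

noncomputable def gdens (m : ℕ) (s x : ℝ) : ℝ :=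
  s ^ (m + 1) * x ^ m * Real.exp (-s * x) / (m.factorial : ℝ)

lemma gdens_mom (m : ℕ) (s : ℝ) (hs : 0 < s) (j : ℕ) :
    IntegrableOn (fun x => x ^ j * gdens m s x) (Set.Ioi 0) ∧
    ∫ x in Set.Ioi (0:ℝ), x ^ j * gdens m s x
      = ((m + j).factorial : ℝ) / (m.factorial * s ^ j) := by
  have e : ∀ x : ℝ, x ^ j * gdens m s x
      = (s ^ (m + 1) / m.factorial) * (x ^ (m + j) * Real.exp (-(s * x))) := by
    intro x; unfold gdens; rw [pow_add, neg_mul]; ring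
  simp only [e]
  constructor
  · have h := integrableOn_rpow_mul_exp_neg_mul_rpow (p := 1) (s := ((m + j : ℕ) : ℝ)) (b := s)
      (by have : (0:ℝ) ≤ ((m + j : ℕ) : ℝ) := Nat.cast_nonneg _
          linarith) one_pos hs
    simp only [Real.rpow_natCast, Real.rpow_one, neg_mul] at h
    exact h.const_mul _
  · rw [integral_const_mul]
    have h := Real.integral_rpow_mul_exp_neg_mul_Ioi (a := ((m + j : ℕ) : ℝ) + 1) (r := s)
      (by positivity) hs
    simp only [add_sub_cancel_right, Real.rpow_natCast, Real.Gamma_nat_eq_factorial] at h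
    rw [h]
    have h2 : (1 / s) ^ (((m + j : ℕ) : ℝ) + 1) = (1 / s) ^ (m + j + 1) := by
      rw [← Real.rpow_natCast]; push_cast; rfl
    rw [h2, one_div, inv_pow]
    have : (m.factorial : ℝ) ≠ 0 := by positivity
    field_simp
    ring

lemma gdens_poly (m : ℕ) (s : ℝ) (hs : 0 < s) (x A B C D E : ℝ) (hx : s * x = m + 1) :
    IntegrableOn (fun y => (A + B * (y - x) + C * (y - x) ^ 2 + D * (y - x) ^ 3
      + E * (y - x) ^ 4) * gdens m s y) (Set.Ioi 0) ∧
    ∫ y in Set.Ioi (0:ℝ), (A + B * (y - x) + C * (y - x) ^ 2 + D * (y - x) ^ 3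
      + E * (y - x) ^ 4) * gdens m s y
      = A + C * (m + 1) / s ^ 2 + 2 * D * (m + 1) / s ^ 3
        + E * (3 * (m + 1) ^ 2 + 6 * (m + 1)) / s ^ 4 := by
  obtain ⟨i0, m0⟩ := gdens_mom m s hs 0
  obtain ⟨i1, m1⟩ := gdens_mom m s hs 1
  obtain ⟨i2, m2⟩ := gdens_mom m s hs 2
  obtain ⟨i3, m3⟩ := gdens_mom m s hs 3
  obtain ⟨i4, m4⟩ := gdens_mom m s hs 4
  have e : ∀ y : ℝ, (A + B * (y - x) + C * (y - x) ^ 2 + D * (y - x) ^ 3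
      + E * (y - x) ^ 4) * gdens m s y
      = (A - B * x + C * x ^ 2 - D * x ^ 3 + E * x ^ 4) * (y ^ 0 * gdens m s y)
      + (B - 2 * C * x + 3 * D * x ^ 2 - 4 * E * x ^ 3) * (y ^ 1 * gdens m s y)
      + (C - 3 * D * x + 6 * E * x ^ 2) * (y ^ 2 * gdens m s y)
      + (D - 4 * E * x) * (y ^ 3 * gdens m s y)
      + E * (y ^ 4 * gdens m s y) := by intro y; ring
  simp only [e]
  have j0 := i0.const_mul (A - B * x + C * x ^ 2 - D * x ^ 3 + E * x ^ 4)
  have j1 := i1.const_mul (B - 2 * C * x + 3 * D * x ^ 2 - 4 * E * x ^ 3)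
  have j2 := i2.const_mul (C - 3 * D * x + 6 * E * x ^ 2)
  have j3 := i3.const_mul (D - 4 * E * x)
  have j4 := i4.const_mul E
  refine ⟨(((j0.add j1).add j2).add j3).add j4, ?_⟩
  have k := integral_add (((j0.add j1).add j2).add j3) j4
  have k3 := integral_add ((j0.add j1).add j2) j3
  have k2 := integral_add (j0.add j1) j2
  have k1 := integral_add j0 j1
  simp only [Pi.add_apply] at k k3 k2 k1
  rw [k, k3, k2, k1]
  simp only [integral_const_mul]
  rw [m0, m1, m2, m3, m4]
  have hx' : x = (m + 1) / s := by field_simp; linarith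
  have : (m.factorial : ℝ) ≠ 0 := by positivity
  simp only [Nat.factorial_succ, Nat.add_zero,
    show m + 2 = m + 1 + 1 from rfl, show m + 3 = m + 1 + 1 + 1 from rfl,
    show m + 4 = m + 1 + 1 + 1 + 1 from rfl]
  push_cast
  rw [hx']
  field_simp
  ring

lemma gdens_nonneg (m : ℕ) (s : ℝ) (hs : 0 < s) (x : ℝ) (hx : 0 < x) : 0 ≤ gdens m s x := by
  unfold gdens; positivity

lemma gdens_err (g : ℝ → ℝ) (hc : ContinuousOn g (Set.Ioi 0)) (m : ℕ) (s : ℝ) (hs : 0 < s)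
    (x A B C D K a b c : ℝ) (hx : s * x = m + 1)
    (hb : ∀ y, 0 < y → |g y - (A + B * (y - x) + C * (y - x) ^ 2 + D * (y - x) ^ 3)|
      ≤ K * (a * (y - x) ^ 2 + b / x * (y - x) ^ 3 + c / x ^ 2 * (y - x) ^ 4)) :
    |(∫ y in Set.Ioi (0:ℝ), g y * gdens m s y)
      - (A + C * (m + 1) / s ^ 2 + 2 * D * (m + 1) / s ^ 3)|
    ≤ K / s ^ 2 * (a * (m + 1) + 2 * b + c * (3 + 6 / (m + 1))) := by
  obtain ⟨iT, vT⟩ := gdens_poly m s hs x A B C D 0 hx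
  obtain ⟨iP, vP⟩ := gdens_poly m s hs x 0 0 (K * a) (K * (b / x)) (K * (c / x ^ 2)) hx
  have hm : (0:ℝ) < m + 1 := by positivity
  have hdc : Continuous (gdens m s) := by unfold gdens; fun_prop
  have hbound : ∀ y ∈ Set.Ioi (0:ℝ), ‖g y * gdens m s y - (A + B * (y - x) + C * (y - x) ^ 2
      + D * (y - x) ^ 3 + 0 * (y - x) ^ 4) * gdens m s y‖ ≤ (0 + 0 * (y - x)
      + (K * a) * (y - x) ^ 2 + (K * (b / x)) * (y - x) ^ 3
      + (K * (c / x ^ 2)) * (y - x) ^ 4) * gdens m s y := by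
    intro y hy
    have hd := gdens_nonneg m s hs y hy
    rw [← sub_mul, norm_mul, Real.norm_eq_abs, Real.norm_eq_abs, abs_of_nonneg hd]
    refine mul_le_mul_of_nonneg_right ?_ hd
    have := hb y hy
    rw [zero_mul, add_zero]
    refine this.trans (le_of_eq ?_)
    ring
  have hae : ∀ᵐ y ∂(volume.restrict (Set.Ioi (0:ℝ))), ‖g y * gdens m s y - (A + B * (y - x)
      + C * (y - x) ^ 2 + D * (y - x) ^ 3 + 0 * (y - x) ^ 4) * gdens m s y‖ ≤ (0 + 0 * (y - x)
      + (K * a) * (y - x) ^ 2 + (K * (b / x)) * (y - x) ^ 3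
      + (K * (c / x ^ 2)) * (y - x) ^ 4) * gdens m s y :=
    (ae_restrict_iff' measurableSet_Ioi).2 (Filter.Eventually.of_forall hbound)
  have hgm : AEStronglyMeasurable (fun y => g y * gdens m s y)
      (volume.restrict (Set.Ioi (0:ℝ))) :=
    (hc.mul hdc.continuousOn).aestronglyMeasurable measurableSet_Ioi
  have iR : IntegrableOn (fun y => g y * gdens m s y - (A + B * (y - x)
      + C * (y - x) ^ 2 + D * (y - x) ^ 3 + 0 * (y - x) ^ 4) * gdens m s y) (Set.Ioi 0) :=
    Integrable.mono' iP (hgm.sub iT.aestronglyMeasurable) hae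
  have ig : IntegrableOn (fun y => g y * gdens m s y) (Set.Ioi 0) := by
    refine (iR.add iT).congr (Filter.Eventually.of_forall fun y => ?_)
    simp
  have h1 := norm_integral_le_of_norm_le iP hae
  rw [integral_sub ig iT, vT, vP, Real.norm_eq_abs] at h1
  have hx' : x = (m + 1) / s := by field_simp; linarith
  convert h1 using 1
  · congr 1; ring
  · rw [hx']; field_simp; ring

lemma grid_err (g g1 g2 g3 g4 : ℝ → ℝ)
    (h0 : ∀ u, 0 < u → HasDerivAt g (g1 u) u)
    (h1 : ∀ u, 0 < u → HasDerivAt g1 (g2 u) u)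
    (h2 : ∀ u, 0 < u → HasDerivAt g2 (g3 u) u)
    (h3 : ∀ u, 0 < u → HasDerivAt g3 (g4 u) u)
    (K3 K : ℝ) (hK3 : ∀ u, 0 < u → |u * g3 u| ≤ K3)
    (hK : ∀ u, 0 < u → |u ^ 2 * g4 u| ≤ K) (t : ℝ) (ht : 0 < t) (k : ℕ) :
    |Mgrid t g (k + 1) - g ((k + 1) / t)| ≤ 1 / (6 * t ^ 2) * K3 + 9 / (16 * t ^ 2) * K := by
  have hKn : 0 ≤ K := (abs_nonneg _).trans (hK 1 one_pos)
  have hc : ContinuousOn g (Set.Ioi 0) :=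
    fun u hu => (h0 u hu).continuousAt.continuousWithinAt
  have hk : (0:ℝ) ≤ k := Nat.cast_nonneg k
  set x : ℝ := (k + 1) / t with hxdef
  have hx : 0 < x := by positivity
  have hR : ∀ y, 0 < y → |g y - (g x + g1 x * (y - x) + g2 x / 2 * (y - x) ^ 2
      + g3 x / 6 * (y - x) ^ 3)| ≤ K * phiRem x y := by
    intro y hy
    rw [abs_le']
    refine ⟨aux_taylor g g1 g2 g3 g4 h0 h1 h2 h3 K (fun u hu => (abs_le.1 (hK u hu)).2) x hx y hy,
      ?_⟩
    have := aux_taylor (-g) (-g1) (-g2) (-g3) (-g4) (fun u hu => (h0 u hu).neg)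
      (fun u hu => (h1 u hu).neg) (fun u hu => (h2 u hu).neg) (fun u hu => (h3 u hu).neg) K
      (fun u hu => by
        have := (abs_le.1 (hK u hu)).1
        simp only [Pi.neg_apply, mul_neg]; linarith) x hx y hy
    refine le_trans (le_of_eq ?_) this
    simp only [Pi.neg_apply]; ring
  have hL1 : Lstar t g ((k : ℝ) / t) = ∫ y in Set.Ioi (0:ℝ), g y * gdens k t y := by
    unfold Lstar gdens
    rw [mul_div_cancel₀ _ ht.ne', Nat.floor_natCast]
  have hL2 : Lstar (2 * t) g ((2 * (k : ℝ) + 1) / (2 * t))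
      = ∫ y in Set.Ioi (0:ℝ), g y * gdens (2 * k + 1) (2 * t) y := by
    unfold Lstar gdens
    have : (2 * t) * ((2 * (k : ℝ) + 1) / (2 * t)) = ((2 * k + 1 : ℕ) : ℝ) := by
      push_cast; field_simp
    rw [this, Nat.floor_natCast]
  have comb : ∀ a b c : ℝ, (∀ y, 0 < y → phiRem x y ≤ a * (y - x) ^ 2 + b / x * (y - x) ^ 3
      + c / x ^ 2 * (y - x) ^ 4) →
      2 * a * (k + 1) + 3 * b + c * (9 / 2 + 15 / (2 * (k + 1))) ≤ 9 / 16 →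
      |Mgrid t g (k + 1) - g x| ≤ 1 / (6 * t ^ 2) * K3 + 9 / (16 * t ^ 2) * K := by
    intro a b c hp hn
    have hb : ∀ y, 0 < y → |g y - (g x + g1 x * (y - x) + g2 x / 2 * (y - x) ^ 2
      + g3 x / 6 * (y - x) ^ 3)| ≤ K * (a * (y - x) ^ 2 + b / x * (y - x) ^ 3
      + c / x ^ 2 * (y - x) ^ 4) := fun y hy =>
        (hR y hy).trans (mul_le_mul_of_nonneg_left (hp y hy) hKn)
    have A1 := gdens_err g hc k t ht x _ _ _ _ K a b c (by rw [hxdef]; field_simp) hb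
    have A2 := gdens_err g hc (2 * k + 1) (2 * t) (by positivity) x _ _ _ _ K a b c
      (by rw [hxdef]; push_cast; field_simp; ring) hb
    rw [← hL1] at A1
    rw [← hL2] at A2
    push_cast at A2
    have hM : Mgrid t g (k + 1) - g x =
        2 * (Lstar (2 * t) g ((2 * (k : ℝ) + 1) / (2 * t)) - (g x + g2 x / 2 * (2 * k + 1 + 1)
          / (2 * t) ^ 2 + 2 * (g3 x / 6) * (2 * k + 1 + 1) / (2 * t) ^ 3))
        - (Lstar t g ((k : ℝ) / t) - (g x + g2 x / 2 * (k + 1) / t ^ 2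
          + 2 * (g3 x / 6) * (k + 1) / t ^ 3)) - 1 / (6 * t ^ 2) * (x * g3 x) := by
      simp only [Mgrid]
      have hx3 : x * g3 x = (k + 1) / t * g3 x := by rw [hxdef]
      rw [hx3]
      field_simp
      ring
    rw [hM]
    have B3 : |1 / (6 * t ^ 2) * (x * g3 x)| ≤ 1 / (6 * t ^ 2) * K3 := by
      rw [abs_mul, abs_of_nonneg (by positivity)]
      exact mul_le_mul_of_nonneg_left (hK3 x hx) (by positivity)
    have hfin : 2 * (K / (2 * t) ^ 2 * (a * (2 * k + 1 + 1) + 2 * b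
        + c * (3 + 6 / (2 * k + 1 + 1)))) + K / t ^ 2 * (a * (k + 1) + 2 * b
        + c * (3 + 6 / (k + 1))) ≤ 9 / (16 * t ^ 2) * K := by
      have e1 : 2 * (K / (2 * t) ^ 2 * (a * (2 * k + 1 + 1) + 2 * b
        + c * (3 + 6 / (2 * k + 1 + 1)))) + K / t ^ 2 * (a * (k + 1) + 2 * b
        + c * (3 + 6 / (k + 1))) = K / t ^ 2 * (2 * a * (k + 1) + 3 * b
          + c * (9 / 2 + 15 / (2 * (k + 1)))) := by
        have : (2 * (k:ℝ) + 1 + 1) = 2 * (k + 1) := by ring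
        rw [this]
        field_simp
        ring
      rw [e1]
      calc _ ≤ K / t ^ 2 * (9 / 16) := mul_le_mul_of_nonneg_left hn (by positivity)
        _ = _ := by field_simp
    rw [abs_le] at A1 A2 B3 ⊢
    constructor <;> linarith [A1.1, A1.2, A2.1, A2.2, B3.1, B3.2]
  by_cases h4 : k < 3
  · apply comb (1/84) (-2/84) (4/84) (fun y hy => phi_le1 x y hx hy)
    interval_cases k <;> norm_num
  · apply comb 0 0 (1/12) (fun y hy => phi_le0 x y hx hy)
    have h5 : (3:ℝ) ≤ k := by exact_mod_cast not_lt.1 h4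
    have : 15 / (2 * ((k:ℝ) + 1)) ≤ 15 / 8 := by
      rw [div_le_div_iff₀ (by positivity) (by norm_num)]; linarith
    linarith

lemma interp_one (g g1 g2 : ℝ → ℝ) (hc : ContinuousOn g (Set.Ici 0))
    (h0 : ∀ u, 0 < u → HasDerivAt g (g1 u) u)
    (h1 : ∀ u, 0 < u → HasDerivAt g1 (g2 u) u)
    (K : ℝ) (hK : ∀ u, 0 < u → -K ≤ g2 u) (a b θ : ℝ) (ha : 0 ≤ a) (hab : a ≤ b)
    (hθ : 0 ≤ θ) (hθ1 : θ ≤ 1) :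
    g (θ * b + (1 - θ) * a) - (θ * g b + (1 - θ) * g a)
      ≤ K / 2 * (θ * (1 - θ) * (b - a) ^ 2) := by
  have hconv : ConvexOn ℝ (Set.Ici 0) (fun u => g u + K / 2 * u ^ 2) := by
    apply convexOn_of_hasDerivWithinAt2_nonneg (convex_Ici 0)
      (f' := fun u => g1 u + K * u) (f'' := fun u => g2 u + K)
    · exact hc.add (by fun_prop)
    · intro u hu
      rw [interior_Ici] at hu ⊢
      have := (h0 u hu).add (((hasDerivAt_id u).pow 2).const_mul (K / 2))
      refine (this.congr_deriv ?_).hasDerivWithinAt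
      simp; ring
    · intro u hu
      rw [interior_Ici] at hu ⊢
      have := (h1 u hu).add ((hasDerivAt_id u).const_mul K)
      refine (this.congr_deriv ?_).hasDerivWithinAt
      simp
    · intro u hu
      rw [interior_Ici] at hu
      linarith [hK u hu]
  have := hconv.2 (Set.mem_Ici.2 (ha.trans hab)) (Set.mem_Ici.2 ha) hθ (sub_nonneg.2 hθ1)
    (by ring)
  simp only [smul_eq_mul] at this
  nlinarith

lemma interp_err (g g1 g2 : ℝ → ℝ) (hc : ContinuousOn g (Set.Ici 0))
    (h0 : ∀ u, 0 < u → HasDerivAt g (g1 u) u)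
    (h1 : ∀ u, 0 < u → HasDerivAt g1 (g2 u) u)
    (K : ℝ) (hK : ∀ u, 0 < u → |g2 u| ≤ K) (a b θ : ℝ) (ha : 0 ≤ a) (hab : a ≤ b)
    (hθ : 0 ≤ θ) (hθ1 : θ ≤ 1) :
    |(θ * g b + (1 - θ) * g a) - g (θ * b + (1 - θ) * a)| ≤ K / 8 * (b - a) ^ 2 := by
  have hKn : 0 ≤ K := (abs_nonneg _).trans (hK 1 one_pos)
  have A := interp_one g g1 g2 hc h0 h1 K (fun u hu => (abs_le.1 (hK u hu)).1) a b θ ha hab hθ hθ1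
  have B := interp_one (-g) (-g1) (-g2) hc.neg (fun u hu => (h0 u hu).neg)
    (fun u hu => (h1 u hu).neg) K
    (fun u hu => by simpa using (abs_le.1 (hK u hu)).2) a b θ ha hab hθ hθ1
  simp only [Pi.neg_apply] at B
  have C : K / 2 * (θ * (1 - θ) * (b - a) ^ 2) ≤ K / 8 * (b - a) ^ 2 := by
    have h4 : θ * (1 - θ) ≤ 1 / 4 := by nlinarith [sq_nonneg (θ - 1 / 2)]
    have h5 : 0 ≤ K / 2 * (b - a) ^ 2 := by positivity
    nlinarith
  rw [abs_le]
  constructor <;> linarith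

lemma third_bound (g2 g3 g4 : ℝ → ℝ)
    (h2 : ∀ u, 0 < u → HasDerivAt g2 (g3 u) u)
    (h3 : ∀ u, 0 < u → HasDerivAt g3 (g4 u) u)
    (K2 K : ℝ) (hK2 : ∀ u, 0 < u → |g2 u| ≤ K2)
    (hK : ∀ u, 0 < u → |u ^ 2 * g4 u| ≤ K) (u : ℝ) (hu : 0 < u) :
    |u * g3 u| ≤ 2 * K2 + K := by
  obtain ⟨c, hc, e1⟩ := exists_hasDerivAt_eq_slope g2 g3 (show u < 2 * u by linarith)
    (fun z hz => (h2 z (by linarith [hz.1])).continuousAt.continuousWithinAt)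
    (fun z hz => h2 z (by linarith [hz.1]))
  obtain ⟨d, hd, e2⟩ := exists_hasDerivAt_eq_slope g3 g4 hc.1
    (fun z hz => (h3 z (by linarith [hz.1])).continuousAt.continuousWithinAt)
    (fun z hz => h3 z (by linarith [hz.1]))
  have hdpos : 0 < d := by linarith [hd.1]
  have hcu : 0 < c - u := by linarith [hc.1]
  have f1 : u * g3 c = g2 (2 * u) - g2 u := by rw [e1]; field_simp; ring
  have f2 : g3 c - g3 u = g4 d * (c - u) := by rw [e2]; field_simp
  have f3 : |u * (g4 d * (c - u))| ≤ K := by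
    refine le_trans ?_ (hK d hdpos)
    rw [abs_mul, abs_mul, abs_mul, abs_of_pos hu, abs_of_pos hcu, abs_of_pos (pow_pos hdpos 2)]
    have : u * (c - u) ≤ d ^ 2 := by nlinarith [hd.1, hc.2]
    nlinarith [abs_nonneg (g4 d)]
  have a1 := abs_le.1 (hK2 (2 * u) (by linarith))
  have a2 := abs_le.1 (hK2 u hu)
  have a3 := abs_le.1 f3
  have : u * g3 u = u * g3 c - u * (g4 d * (c - u)) := by rw [← f2]; ring
  rw [this, f1, abs_le]
  constructor <;> linarith [a1.1, a1.2, a2.1, a2.2, a3.1, a3.2]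

lemma sup_pt (f : ℝ → ℝ) (h : (⨆ u ∈ Set.Ioi (0:ℝ), (‖f u‖₊ : ℝ≥0∞)) ≠ ⊤) (u : ℝ)
    (hu : 0 < u) : |f u| ≤ (⨆ u ∈ Set.Ioi (0:ℝ), (‖f u‖₊ : ℝ≥0∞)).toReal := by
  have h1 : (‖f u‖₊ : ℝ≥0∞) ≤ ⨆ u ∈ Set.Ioi (0:ℝ), (‖f u‖₊ : ℝ≥0∞) :=
    le_iSup₂ (f := fun u (_ : u ∈ Set.Ioi (0:ℝ)) => (‖f u‖₊ : ℝ≥0∞)) u hu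
  have h2 := ENNReal.toReal_mono h h1
  simpa using h2

lemma sup_fin (f : ℝ → ℝ) (s : Set ℝ) (C : ℝ) (h : ∀ u ∈ s, |f u| ≤ C) :
    (⨆ u ∈ s, (‖f u‖₊ : ℝ≥0∞)) ≤ ENNReal.ofReal C := by
  refine iSup₂_le fun u hu => ?_
  have : (‖f u‖₊ : ℝ≥0∞) = ENNReal.ofReal |f u| := by
    rw [← Real.norm_eq_abs, ofReal_norm]; rfl
  rw [this]
  exact ENNReal.ofReal_le_ofReal (h u hu)

/-- for `g ∈ D₁` (continuous on `[0,∞)`, four times continuously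
differentiable on `(0,∞)`, with `‖g''‖ < ∞` and `‖u² g⁗(u)‖ < ∞`) and `t > 0`,
`sup_{u ≥ 0} |M_t^{[2]} g(u) - g(u)| ≤ ‖g''‖/(8t²) + ‖u g'''(u)‖/(6t²)
 + 9‖u² g⁗(u)‖/(16t²) < ∞` (suprema in `ℝ≥0∞`, over `(0,∞)` on the right). -/
theorem stmt_14 (g : ℝ → ℝ)
    (hg_cont : ContinuousOn g (Set.Ici 0))
    (hg_cd : ContDiffOn ℝ 4 g (Set.Ioi 0))
    (hg2 : (⨆ u ∈ Set.Ioi (0:ℝ), (‖iteratedDeriv 2 g u‖₊ : ℝ≥0∞)) ≠ ⊤)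
    (hg4 : (⨆ u ∈ Set.Ioi (0:ℝ), (‖u ^ 2 * iteratedDeriv 4 g u‖₊ : ℝ≥0∞)) ≠ ⊤)
    (t : ℝ) (ht : 0 < t) :
    ∀ B : ℝ≥0∞,
      B = ENNReal.ofReal (1 / (8 * t ^ 2))
            * (⨆ u ∈ Set.Ioi (0:ℝ), (‖iteratedDeriv 2 g u‖₊ : ℝ≥0∞))
          + ENNReal.ofReal (1 / (6 * t ^ 2))
            * (⨆ u ∈ Set.Ioi (0:ℝ), (‖u * iteratedDeriv 3 g u‖₊ : ℝ≥0∞))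
          + ENNReal.ofReal (9 / (16 * t ^ 2))
            * (⨆ u ∈ Set.Ioi (0:ℝ), (‖u ^ 2 * iteratedDeriv 4 g u‖₊ : ℝ≥0∞)) →
      (⨆ u ∈ Set.Ici (0:ℝ), (‖Mt2 t g u - g u‖₊ : ℝ≥0∞)) ≤ B ∧ B < ⊤ := by

  intro B hB
  have h0 : ∀ u, 0 < u → HasDerivAt g (iteratedDeriv 1 g u) u := by
    have := iter_hasDeriv g hg_cd 0 (by norm_num)
    simpa only [iteratedDeriv_zero] using this
  have h1 := iter_hasDeriv g hg_cd 1 (by norm_num)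
  have h2 := iter_hasDeriv g hg_cd 2 (by norm_num)
  have h3 := iter_hasDeriv g hg_cd 3 (by norm_num)
  simp only [Nat.reduceAdd] at h1 h2 h3
  have k2 := sup_pt _ hg2
  have k4 := sup_pt _ hg4
  have hb3 := third_bound _ _ _ h2 h3 _ _ k2 k4
  have hg3 : (⨆ u ∈ Set.Ioi (0:ℝ), (‖u * iteratedDeriv 3 g u‖₊ : ℝ≥0∞)) ≠ ⊤ :=
    ne_top_of_le_ne_top ENNReal.ofReal_ne_top (sup_fin _ (Set.Ioi 0) _ hb3)
  have k3 := sup_pt _ hg3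
  set S2 := (⨆ u ∈ Set.Ioi (0:ℝ), (‖iteratedDeriv 2 g u‖₊ : ℝ≥0∞))
  set S3 := (⨆ u ∈ Set.Ioi (0:ℝ), (‖u * iteratedDeriv 3 g u‖₊ : ℝ≥0∞))
  set S4 := (⨆ u ∈ Set.Ioi (0:ℝ), (‖u ^ 2 * iteratedDeriv 4 g u‖₊ : ℝ≥0∞))
  have hBr : B = ENNReal.ofReal (1 / (8 * t ^ 2) * S2.toReal + (1 / (6 * t ^ 2) * S3.toReal
      + 9 / (16 * t ^ 2) * S4.toReal)) := by
    rw [hB, ENNReal.ofReal_add (by positivity) (by positivity),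
      ENNReal.ofReal_add (by positivity) (by positivity),
      ENNReal.ofReal_mul (by positivity), ENNReal.ofReal_mul (by positivity),
      ENNReal.ofReal_mul (by positivity), ENNReal.ofReal_toReal hg2, ENNReal.ofReal_toReal hg3,
      ENNReal.ofReal_toReal hg4, add_assoc]
  refine ⟨?_, by rw [hBr]; exact ENNReal.ofReal_lt_top⟩
  rw [hBr]
  refine sup_fin _ _ _ fun u hu => ?_
  have hu0 : (0:ℝ) ≤ u := hu
  have hgrid : ∀ k : ℕ, |Mgrid t g k - g (k / t)| ≤ 1 / (6 * t ^ 2) * S3.toReal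
      + 9 / (16 * t ^ 2) * S4.toReal := by
    intro k
    cases k with
    | zero => simp only [Mgrid, Nat.cast_zero, zero_div, sub_self, abs_zero]; positivity
    | succ k =>
      have := grid_err g _ _ _ _ h0 h1 h2 h3 _ _ k3 k4 t ht k
      push_cast
      exact this
  have htu : 0 ≤ t * u := by positivity
  have f1 := Nat.floor_le htu
  have f2 := Nat.lt_floor_add_one (t * u)
  unfold Mt2
  set k := ⌊t * u⌋₊
  have e1 := hgrid (k + 1)
  have e0 := hgrid k
  push_cast at e1
  set θ := t * u - (k:ℝ) with hθ
  have hθ0 : 0 ≤ θ := by linarith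
  have hθ1 : θ ≤ 1 := by linarith
  have e2 := interp_err g _ _ hg_cont h0 h1 _ k2 (k / t) ((k + 1) / t) θ (by positivity)
    (by gcongr; linarith) hθ0 hθ1
  have eu : θ * ((k + 1) / t) + (1 - θ) * (k / t) = u := by
    rw [hθ]; field_simp; ring
  have el : S2.toReal / 8 * (((k:ℝ) + 1) / t - k / t) ^ 2 = 1 / (8 * t ^ 2) * S2.toReal := by
    field_simp; ring
  rw [eu, el] at e2
  have ew : (k:ℝ) + 1 - t * u = 1 - θ := by rw [hθ]; ring
  rw [ew]
  have e3 : |θ * (Mgrid t g (k + 1) - g ((k + 1) / t)) + (1 - θ) * (Mgrid t g k - g (k / t))|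
      ≤ 1 / (6 * t ^ 2) * S3.toReal + 9 / (16 * t ^ 2) * S4.toReal := by
    refine (abs_add_le _ _).trans ?_
    rw [abs_mul, abs_mul, abs_of_nonneg hθ0, abs_of_nonneg (sub_nonneg.2 hθ1)]
    have m1 := mul_le_mul_of_nonneg_left e1 hθ0
    have m0 := mul_le_mul_of_nonneg_left e0 (sub_nonneg.2 hθ1)
    linarith
  have es : θ * Mgrid t g (k + 1) + (1 - θ) * Mgrid t g k - g u
      = ((θ * g ((k + 1) / t) + (1 - θ) * g (k / t)) - g u)
      + (θ * (Mgrid t g (k + 1) - g ((k + 1) / t)) + (1 - θ) * (Mgrid t g k - g (k / t))) := by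
    ring
  rw [es]
  exact (abs_add_le _ _).trans (add_le_add e2 e3)
end
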